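/- arXiv:2109.07649 — 3 statements merged into one kernel-verified Lean document; each statement's English description precedes it below -/
import Mathlib

section
/- For $\mathrm{Re}(s) > 0$ and even integer $k$, and for real $t \neq 0$, $\int_{\mathbb{R}} (b^2+1)^{-(s+1/2)} \Big(\frac{b-i}{\sqrt{b^2+1}}\Big)^k e^{i t b}\, db = \frac{(-1)^{k/2}\pi^{s+1/2}\,(|t|/(2\pi))^{s-1/2}}{\Gamma(s+1/2 - \mathrm{sgn}(t)k/2)}\, W_{-\mathrm{sgn}(t)k/2,\,-s}(2|t|)$. -/
open Complex MeasureTheory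

lemma holo_int {α : Type*} [MeasurableSpace α] {μ : Measure α} {F : ℂ → α → ℂ} {w0 : ℂ} {R : ℝ}
    (hR : 0 < R) (bound : α → ℝ)
    (hm : ∀ w ∈ Metric.ball w0 R, AEStronglyMeasurable (F w) μ)
    (hb : ∀ᵐ a ∂μ, ∀ w ∈ Metric.ball w0 R, ‖F w a‖ ≤ bound a)
    (hbi : Integrable bound μ)
    (hd : ∀ᵐ a ∂μ, DifferentiableOn ℂ (fun w => F w a) (Metric.ball w0 R)) :
    DifferentiableAt ℂ (fun w => ∫ a, F w a ∂μ) w0 := by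
  have hw0 : w0 ∈ Metric.ball w0 R := Metric.mem_ball_self hR
  have hmeas : AEStronglyMeasurable (fun a => deriv (fun w => F w a) w0) μ := by
    have hlim : Filter.Tendsto (fun n : ℕ => ((R / (n + 2 : ℝ) : ℝ) : ℂ)) Filter.atTop
        (nhdsWithin 0 {0}ᶜ) := by
      rw [tendsto_nhdsWithin_iff]
      constructor
      · have : Filter.Tendsto (fun n : ℕ => (R / (n + 2 : ℝ) : ℝ)) Filter.atTop (nhds 0) := by
          apply Filter.Tendsto.div_atTop tendsto_const_nhds
          exact Filter.tendsto_atTop_add_const_right _ _ tendsto_natCast_atTop_atTop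
        exact_mod_cast (Complex.continuous_ofReal.tendsto 0).comp this
      · refine Filter.Eventually.of_forall fun n => ?_
        simp only [Set.mem_compl_iff, Set.mem_singleton_iff, ofReal_eq_zero]
        positivity
    refine aestronglyMeasurable_of_tendsto_ae (u := Filter.atTop)
      (f := fun (n : ℕ) a => (((R / (n + 2 : ℝ) : ℝ) : ℂ))⁻¹ • (F (w0 + ((R / (n + 2 : ℝ) : ℝ) : ℂ)) a - F w0 a)) ?_ ?_
    · intro n
      suffices hmem : w0 + ((R / (n + 2 : ℝ) : ℝ) : ℂ) ∈ Metric.ball w0 R from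
        ((hm _ hmem).sub (hm _ hw0)).const_smul (((R / (n + 2 : ℝ) : ℝ) : ℂ))⁻¹
      rw [Metric.mem_ball, dist_eq_norm, add_sub_cancel_left, norm_real, Real.norm_eq_abs,
        abs_of_pos (by positivity)]
      apply div_lt_self hR
      have : (0:ℝ) ≤ n := by positivity
      linarith
    · filter_upwards [hd] with a ha
      have h1 := (ha.differentiableAt (Metric.isOpen_ball.mem_nhds hw0)).hasDerivAt
      exact (hasDerivAt_iff_tendsto_slope_zero.1 h1).comp hlim
  refine (hasDerivAt_integral_of_dominated_loc_of_deriv_le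
    (F' := fun w a => deriv (fun w => F w a) w) (bound := fun a => bound a / (R / 4))
    (Metric.ball_mem_nhds w0 (half_pos hR)) ?_ ?_ hmeas ?_ ?_ ?_).2.differentiableAt
  · filter_upwards [Metric.ball_mem_nhds w0 hR] with w hw using hm w hw
  · exact hbi.mono' (hm _ hw0) (hb.mono fun a ha => ha _ hw0)
  · filter_upwards [hb, hd] with a ha hda w hw
    have hsub : Metric.closedBall w (R / 4) ⊆ Metric.ball w0 R := by
      intro x hx
      rw [Metric.mem_closedBall] at hx
      rw [Metric.mem_ball] at hw ⊢
      linarith [dist_triangle x w w0]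
    refine Complex.norm_deriv_le_of_forall_mem_sphere_norm_le (by positivity) ?_ ?_
    · refine DifferentiableOn.diffContOnCl ?_
      rw [closure_ball _ (by positivity)]
      exact hda.mono hsub
    · intro z hz
      exact ha z (hsub (Metric.sphere_subset_closedBall hz))
  · exact hbi.div_const _
  · filter_upwards [hd] with a ha w hw
    refine (ha.differentiableAt (Metric.isOpen_ball.mem_nhds ?_)).hasDerivAt
    exact Metric.ball_subset_ball (by linarith) hw

lemma re_near {w w0 : ℂ} {R : ℝ} (hw : w ∈ Metric.ball w0 R) : |w.re - w0.re| < R := by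
  rw [Metric.mem_ball, dist_eq_norm] at hw
  have := Complex.abs_re_le_norm (w - w0)
  rw [sub_re] at this
  linarith

lemma isPreconnected_re (c : ℝ) : IsPreconnected {w : ℂ | c < w.re} :=
  (convex_halfSpace_re_gt c).isPreconnected

/-- real integrability of x^p e^{-rx} -/
lemma int_rpow_exp {p r : ℝ} (hp : -1 < p) (hr : 0 < r) :
    IntegrableOn (fun x : ℝ => x ^ p * Real.exp (-r * x)) (Set.Ioi 0) := by
  simpa using integrableOn_rpow_mul_exp_neg_mul_rpow (p := 1) hp one_pos hr

lemma norm_cpow_pos {x : ℝ} (hx : 0 < x) (a : ℂ) : ‖(x : ℂ) ^ a‖ = x ^ a.re :=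
  Complex.norm_cpow_eq_rpow_re_of_pos hx a

lemma gamma_complex {a : ℂ} (ha : 0 < a.re) {r : ℂ} (hr : 0 < r.re) :
    ∫ (t : ℝ) in Set.Ioi 0, (t : ℂ) ^ (a - 1) * cexp (-(r * t)) = r ^ (-a) * Gamma a := by
  have hop : IsOpen {w : ℂ | 0 < w.re} := isOpen_lt continuous_const continuous_re
  have h1 : DifferentiableOn ℂ (fun r : ℂ => ∫ (t : ℝ) in Set.Ioi 0, (t : ℂ) ^ (a - 1) * cexp (-(r * t)))
      {w | 0 < w.re} := by
    intro r0 hr0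
    simp only [Set.mem_ofPred_eq] at hr0
    refine (holo_int (R := r0.re / 2) (by linarith)
      (fun t => t ^ (a.re - 1) * Real.exp (-(r0.re / 2) * t)) ?_ ?_ ?_ ?_).differentiableWithinAt
    · intro w _
      refine ContinuousOn.aestronglyMeasurable ?_ measurableSet_Ioi
      refine ContinuousOn.mul ?_ (by fun_prop)
      intro t ht
      exact (Complex.continuousAt_ofReal_cpow_const t _ (Or.inr (ne_of_gt ht))).continuousWithinAt
    · filter_upwards [ae_restrict_mem measurableSet_Ioi] with t ht w hw
      rw [Set.mem_Ioi] at ht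
      rw [norm_mul, norm_cpow_pos ht, Complex.norm_exp]
      simp only [sub_re, one_re, neg_re, mul_re, ofReal_re, ofReal_im, mul_zero, sub_zero]
      gcongr
      have := abs_lt.1 (re_near hw)
      nlinarith
    · exact int_rpow_exp (by linarith) (by linarith)
    · refine Filter.Eventually.of_forall fun t => ?_
      fun_prop
  have h2 : DifferentiableOn ℂ (fun r : ℂ => r ^ (-a) * Gamma a) {w | 0 < w.re} := by
    intro r0 hr0
    refine DifferentiableAt.differentiableWithinAt ?_
    refine DifferentiableAt.mul_const ?_ _
    exact (differentiableAt_id).cpow_const (Or.inl hr0)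
  refine (h1.analyticOnNhd hop).eqOn_of_preconnected_of_frequently_eq (h2.analyticOnNhd hop)
    (isPreconnected_re 0) (z₀ := 1) (by simp) ?_ hr
  have hlim : Filter.Tendsto (fun x : ℝ => (x : ℂ)) (nhdsWithin 1 {1}ᶜ) (nhdsWithin 1 {1}ᶜ) := by
    rw [tendsto_nhdsWithin_iff]
    constructor
    · exact_mod_cast (Complex.continuous_ofReal.tendsto 1).mono_left nhdsWithin_le_nhds
    · filter_upwards [self_mem_nhdsWithin] with x hx
      simpa using hx
  refine hlim.frequently (Filter.Eventually.frequently ?_)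
  filter_upwards [nhdsWithin_le_nhds (lt_mem_nhds (zero_lt_one))] with x hx
  rw [Complex.integral_cpow_mul_exp_neg_mul_Ioi ha hx, one_div, cpow_neg,
    Complex.inv_cpow _ _ (by rw [Complex.arg_ofReal_of_nonneg (le_of_lt hx)]; exact Real.pi_pos.ne)]

lemma one_add_bound {z : ℝ} (hz : 0 < z) (p : ℝ) :
    ∃ C : ℝ, ∀ q ≤ p, ∀ t : ℝ, 0 < t → (1 + t / z) ^ q ≤ C * Real.exp (t / 2) := by
  set P := max p 1 with hP
  have hP0 : 0 < P := lt_of_lt_of_le one_pos (le_max_right _ _)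
  refine ⟨(1 + 2 * P / z) ^ P, fun q hq t ht => ?_⟩
  have h1 : 1 + t / z ≤ (1 + 2 * P / z) * Real.exp (t / (2 * P)) := by
    have := Real.add_one_le_exp (t / (2 * P))
    calc 1 + t / z = 1 + 2 * P / z * (t / (2 * P)) := by field_simp
      _ ≤ (1 + 2 * P / z) * (t / (2 * P) + 1) := by
          have : 0 < 2 * P / z := by positivity
          have : 0 < t / (2 * P) := by positivity
          nlinarith
      _ ≤ _ := by gcongr
  have h0 : 1 ≤ 1 + t / z := by
    have : 0 < t / z := by positivity
    linarith
  calc (1 + t / z) ^ q ≤ (1 + t / z) ^ P :=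
        Real.rpow_le_rpow_of_exponent_le h0 (hq.trans (le_max_left _ _))
    _ ≤ ((1 + 2 * P / z) * Real.exp (t / (2 * P))) ^ P := by gcongr
    _ = _ := by
      rw [Real.mul_rpow (by positivity) (by positivity), ← Real.exp_mul]
      congr 2
      field_simp

/-- integrand -/
noncomputable def wI (z : ℝ) (a c : ℂ) (t : ℝ) : ℂ :=
  ((t : ℝ) : ℂ) ^ (a - 1) * (1 + ((t : ℝ) : ℂ) / ((z : ℝ) : ℂ)) ^ c * Real.exp (-t)

lemma wI_cont {z : ℝ} (hz : 0 < z) (a c : ℂ) : ContinuousOn (wI z a c) (Set.Ioi 0) := by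
  intro t ht
  rw [Set.mem_Ioi] at ht
  refine ContinuousAt.continuousWithinAt ?_
  unfold wI
  refine ContinuousAt.mul (ContinuousAt.mul ?_ ?_) (by fun_prop)
  · exact (Complex.continuousAt_ofReal_cpow_const t _ (Or.inr (ne_of_gt ht)))
  · refine ContinuousAt.cpow (by fun_prop) (by fun_prop) ?_
    left
    have : 0 < t / z := by positivity
    rw [← ofReal_div, add_re, one_re, ofReal_re]
    linarith

lemma wI_norm {z : ℝ} (hz : 0 < z) (a c : ℂ) {t : ℝ} (ht : 0 < t) :
    ‖wI z a c t‖ = t ^ (a.re - 1) * (1 + t / z) ^ c.re * Real.exp (-t) := by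
  unfold wI
  have h : (1 + ((t : ℝ) : ℂ) / ((z : ℝ) : ℂ)) = ((1 + t / z : ℝ) : ℂ) := by push_cast; rfl
  have : 0 < t / z := by positivity
  rw [norm_mul, norm_mul, h, norm_cpow_pos ht, norm_cpow_pos (by linarith), norm_real,
    Real.norm_eq_abs, abs_of_pos (Real.exp_pos _), sub_re, one_re]

lemma wI_int {z : ℝ} (hz : 0 < z) {a : ℂ} (c : ℂ) (ha : 0 < a.re) :
    IntegrableOn (wI z a c) (Set.Ioi 0) := by
  obtain ⟨C, hC⟩ := one_add_bound hz c.re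
  refine Integrable.mono' ((int_rpow_exp (p := a.re - 1) (r := 1 / 2) (by linarith)
    (by norm_num)).const_mul C) ((wI_cont hz a c).aestronglyMeasurable measurableSet_Ioi) ?_
  filter_upwards [ae_restrict_mem measurableSet_Ioi] with t ht
  rw [Set.mem_Ioi] at ht
  rw [wI_norm hz _ _ ht]
  calc t ^ (a.re - 1) * (1 + t / z) ^ c.re * Real.exp (-t)
      ≤ t ^ (a.re - 1) * (C * Real.exp (t / 2)) * Real.exp (-t) := by
        gcongr; exact hC _ le_rfl _ ht
    _ = C * (t ^ (a.re - 1) * (Real.exp (t / 2) * Real.exp (-t))) := by ring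
    _ = _ := by rw [← Real.exp_add]; congr 3; ring

lemma wI_diff {z : ℝ} (hz : 0 < z) {a c : ℂ → ℂ} (ha : Differentiable ℂ a)
    (hc : Differentiable ℂ c) {w0 : ℂ} (h0 : 0 < (a w0).re) :
    DifferentiableAt ℂ (fun w => ∫ t in Set.Ioi (0 : ℝ), wI z (a w) (c w) t) w0 := by
  have hac : Continuous fun w => (a w).re := continuous_re.comp ha.continuous
  have hcc : Continuous fun w => (c w).re := continuous_re.comp hc.continuous
  have e1 : ∀ᶠ w in nhds w0, (a w0).re / 2 < (a w).re :=
    hac.continuousAt.eventually (lt_mem_nhds (by linarith))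
  have e2 : ∀ᶠ w in nhds w0, (a w).re < (a w0).re + 1 :=
    hac.continuousAt.eventually (gt_mem_nhds (by linarith))
  have e3 : ∀ᶠ w in nhds w0, (c w).re < (c w0).re + 1 :=
    hcc.continuousAt.eventually (gt_mem_nhds (by linarith))
  obtain ⟨R, hR, hball⟩ := Metric.eventually_nhds_iff_ball.1 (e1.and (e2.and e3))
  obtain ⟨C, hC⟩ := one_add_bound hz ((c w0).re + 1)
  refine holo_int hR (fun t => C * (t ^ ((a w0).re / 2 - 1) * Real.exp (-(1 / 2) * t)) +
    C * (t ^ ((a w0).re + 1 - 1) * Real.exp (-(1 / 2) * t))) ?_ ?_ ?_ ?_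
  · intro w _
    exact (wI_cont hz _ _).aestronglyMeasurable measurableSet_Ioi
  · filter_upwards [ae_restrict_mem measurableSet_Ioi] with t ht w hw
    rw [Set.mem_Ioi] at ht
    obtain ⟨h1, h2, h3⟩ := hball w hw
    rw [wI_norm hz _ _ ht]
    have hb : t ^ ((a w).re - 1) ≤ t ^ ((a w0).re / 2 - 1) + t ^ ((a w0).re + 1 - 1) := by
      rcases le_total t 1 with h | h
      · have := Real.rpow_le_rpow_of_exponent_ge ht h (sub_le_sub_right h1.le 1)
        have : 0 < t ^ ((a w0).re + 1 - 1) := by positivity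
        linarith
      · have := Real.rpow_le_rpow_of_exponent_le h (sub_le_sub_right h2.le 1)
        have : 0 < t ^ ((a w0).re / 2 - 1) := by positivity
        linarith
    have hCt := hC _ h3.le _ ht
    have hexp : Real.exp (t / 2) * Real.exp (-t) = Real.exp (-(1 / 2) * t) := by
      rw [← Real.exp_add]; congr 1; ring
    have : 0 < t / z := by positivity
    calc t ^ ((a w).re - 1) * (1 + t / z) ^ (c w).re * Real.exp (-t)
        ≤ (t ^ ((a w0).re / 2 - 1) + t ^ ((a w0).re + 1 - 1)) * (C * Real.exp (t / 2)) * Real.exp (-t) := by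
          gcongr
      _ = C * (t ^ ((a w0).re / 2 - 1) * (Real.exp (t / 2) * Real.exp (-t))) +
        C * (t ^ ((a w0).re + 1 - 1) * (Real.exp (t / 2) * Real.exp (-t))) := by ring
      _ = _ := by rw [hexp]
  · exact ((int_rpow_exp (by linarith) (by norm_num)).const_mul _).add
      ((int_rpow_exp (by linarith) (by norm_num)).const_mul _)
  · filter_upwards [ae_restrict_mem measurableSet_Ioi] with t ht
    rw [Set.mem_Ioi] at ht
    refine Differentiable.differentiableOn ?_
    unfold wI
    have : 0 < t / z := by positivity
    have h : (1 + ((t : ℝ) : ℂ) / ((z : ℝ) : ℂ)) ≠ 0 := by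
      have h : (1 + ((t : ℝ) : ℂ) / ((z : ℝ) : ℂ)) = ((1 + t / z : ℝ) : ℂ) := by push_cast; rfl
      rw [h, ofReal_ne_zero]
      linarith
    have h' : (t : ℂ) ≠ 0 := ofReal_ne_zero.2 ht.ne'
    refine ((Differentiable.const_cpow (ha.sub_const 1) (Or.inl h')).mul
      (hc.const_cpow (Or.inl h))).mul_const _

lemma wI_parts {z : ℝ} (hz : 0 < z) {a : ℂ} (c : ℂ) (ha : 0 < a.re) :
    a * (∫ t in Set.Ioi (0 : ℝ), wI z a c t) = (∫ t in Set.Ioi (0 : ℝ), wI z (a + 1) c t) -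
      c / z * ∫ t in Set.Ioi (0 : ℝ), wI z (a + 1) (c - 1) t := by
  have ha1 : 0 < (a + 1).re := by simp; linarith
  have i1 := (wI_int hz c ha).const_mul a
  have i2 := (wI_int hz c ha1)
  have i3 := (wI_int hz (c - 1) ha1).const_mul (c / z)
  have key := integral_Ioi_of_hasDerivAt_of_tendsto (a := 0)
    (f := fun t : ℝ => (t : ℂ) ^ a * (1 + (t : ℂ) / (z : ℂ)) ^ c * ((Real.exp (-t) : ℝ) : ℂ))
    (f' := fun t : ℝ => a * wI z a c t + c / z * wI z (a + 1) (c - 1) t - wI z (a + 1) c t)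
    (m := 0) ?_ ?_ ((i1.add i3).sub i2) ?_
  · have i4 : Integrable (fun x => a * wI z a c x + c / z * wI z (a + 1) (c - 1) x)
      (volume.restrict (Set.Ioi 0)) := i1.add i3
    rw [integral_sub i4 i2, integral_add i1 i3, integral_const_mul, integral_const_mul] at key
    have hne : a ≠ 0 := by rintro rfl; simp at ha
    simp only [ofReal_zero, Complex.zero_cpow hne, zero_mul, sub_zero] at key
    linear_combination key
  · refine ContinuousAt.continuousWithinAt ?_
    refine ContinuousAt.mul (ContinuousAt.mul ?_ ?_) (by fun_prop)
    · exact (Complex.continuousAt_ofReal_cpow_const 0 _ (Or.inl ha))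
    · refine ContinuousAt.cpow (by fun_prop) (by fun_prop) ?_
      left
      simp
  · intro t ht
    rw [Set.mem_Ioi] at ht
    have hpos : 0 < t / z := by positivity
    have hb : (1 + (t : ℂ) / (z : ℂ)) = ((1 + t / z : ℝ) : ℂ) := by push_cast; rfl
    have d1 : HasDerivAt (fun t : ℝ => (t : ℂ) ^ a) (a * (t : ℂ) ^ (a - 1)) t := by
      have := (HasDerivAt.cpow_const (c := a) (hasDerivAt_id (t : ℂ))
        (Or.inl (by simpa using ht))).comp_ofReal
      simpa using this
    have d2 : HasDerivAt (fun t : ℝ => (1 + (t : ℂ) / (z : ℂ)) ^ c)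
        (c * (1 + (t : ℂ) / (z : ℂ)) ^ (c - 1) * (1 / z)) t := by
      have := (HasDerivAt.cpow_const (c := c) (((hasDerivAt_id (t : ℂ)).div_const (z : ℂ)).const_add 1)
        (Or.inl (by simp only [id]; rw [hb, ofReal_re]; linarith))).comp_ofReal
      simpa using this
    have d3 : HasDerivAt (fun t : ℝ => ((Real.exp (-t) : ℝ) : ℂ)) (-((Real.exp (-t) : ℝ) : ℂ)) t := by
      have := ((Real.hasDerivAt_exp (-t)).comp t (hasDerivAt_neg t)).ofReal_comp
      simpa using this
    refine ((d1.mul d2).mul d3).congr_deriv ?_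
    unfold wI
    simp only [add_sub_cancel_right, Pi.mul_apply]
    ring
  · rw [tendsto_zero_iff_norm_tendsto_zero]
    obtain ⟨C, hC⟩ := one_add_bound hz c.re
    have hl := (tendsto_rpow_mul_exp_neg_mul_atTop_nhds_zero a.re (1 / 2) (by norm_num)).const_mul C
    rw [mul_zero] at hl
    refine squeeze_zero' (Filter.Eventually.of_forall fun t => norm_nonneg _) ?_ hl
    filter_upwards [Filter.eventually_gt_atTop 0] with t ht
    have := wI_norm hz (a + 1) c ht
    unfold wI at this
    simp only [add_sub_cancel_right, add_re, one_re] at this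
    rw [this]
    calc t ^ (a.re) * (1 + t / z) ^ c.re * Real.exp (-t)
        ≤ t ^ (a.re) * (C * Real.exp (t / 2)) * Real.exp (-t) := by
          gcongr; exact hC _ le_rfl _ ht
      _ = C * (t ^ (a.re) * (Real.exp (t / 2) * Real.exp (-t))) := by ring
      _ = _ := by rw [← Real.exp_add]; congr 3; ring

noncomputable def wG (z : ℝ) : ℕ → ℂ → ℂ → ℂ
  | 0, a, c => (Gamma a)⁻¹ * ∫ t in Set.Ioi (0 : ℝ), wI z a c t
  | n + 1, a, c => wG z n (a + 1) c - c / z * wG z n (a + 1) (c - 1)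

lemma wG_step {z : ℝ} (hz : 0 < z) (n : ℕ) : ∀ (a c : ℂ), 0 < a.re + n →
    wG z (n + 1) a c = wG z n a c := by
  induction n with
  | zero =>
    intro a c ha
    simp only [Nat.cast_zero, add_zero] at ha
    have hne : a ≠ 0 := by rintro rfl; simp at ha
    have hG : Gamma a ≠ 0 := Complex.Gamma_ne_zero_of_re_pos ha
    have := wI_parts hz c ha
    simp only [wG]
    rw [Complex.Gamma_add_one _ hne]
    field_simp
    linear_combination -this
  | succ n ih =>
    intro a c ha
    have h : 0 < (a + 1).re + n := by push_cast at ha; simp; linarith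
    rw [wG, ih _ _ h, ih _ _ h, ← wG]

lemma wG_mono {z : ℝ} (hz : 0 < z) {n m : ℕ} (h : n ≤ m) (a c : ℂ) (ha : 0 < a.re + n) :
    wG z m a c = wG z n a c := by
  induction m, h using Nat.le_induction with
  | base => rfl
  | succ m hm ih =>
    rw [wG_step hz, ih]
    have : (n : ℝ) ≤ m := by exact_mod_cast hm
    linarith

lemma wG_diff {z : ℝ} (hz : 0 < z) (n : ℕ) : ∀ {a c : ℂ → ℂ} (_ : Differentiable ℂ a)
    (_ : Differentiable ℂ c) {w0 : ℂ} (_ : 0 < (a w0).re + n),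
    DifferentiableAt ℂ (fun w => wG z n (a w) (c w)) w0 := by
  induction n with
  | zero =>
    intro a c ha hc w0 h0
    simp only [Nat.cast_zero, add_zero] at h0
    simp only [wG]
    refine DifferentiableAt.mul ?_ (wI_diff hz ha hc h0)
    exact (Complex.differentiable_one_div_Gamma.comp ha) w0
  | succ n ih =>
    intro a c ha hc w0 h0
    have h : 0 < (a w0 + 1).re + n := by push_cast at h0; simp; linarith
    simp only [wG]
    refine (ih (ha.add_const 1) hc h).sub (((hc w0).div_const _).mul
      (ih (ha.add_const 1) (hc.sub_const 1) h))

noncomputable def wF (z : ℝ) (a c : ℂ) : ℂ := wG z (⌈-a.re⌉₊ + 1) a c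

lemma wF_eq {z : ℝ} (hz : 0 < z) (n : ℕ) (a c : ℂ) (ha : 0 < a.re + n) :
    wF z a c = wG z n a c := by
  have h1 : 0 < a.re + ((⌈-a.re⌉₊ + 1 : ℕ) : ℝ) := by
    have := Nat.le_ceil (-a.re)
    push_cast
    linarith
  unfold wF
  rw [← wG_mono hz (le_max_left _ n) a c h1, ← wG_mono hz (le_max_right (⌈-a.re⌉₊ + 1) n) a c ha]

lemma wF_diff {z : ℝ} (hz : 0 < z) {a c : ℂ → ℂ} (ha : Differentiable ℂ a)
    (hc : Differentiable ℂ c) : Differentiable ℂ (fun w => wF z (a w) (c w)) := by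
  intro w0
  obtain ⟨n, hn⟩ := exists_nat_gt (-(a w0).re)
  have hn' : 0 < (a w0).re + n := by linarith
  refine (wG_diff hz n ha hc hn').congr_of_eventuallyEq ?_
  have hac : Continuous fun w => (a w).re + n := (continuous_re.comp ha.continuous).add continuous_const
  filter_upwards [hac.continuousAt.eventually (lt_mem_nhds hn')] with w hw
  exact wF_eq hz n _ _ hw

lemma wF_pos {z : ℝ} (hz : 0 < z) (a c : ℂ) (ha : 0 < a.re) :
    wF z a c = (Gamma a)⁻¹ * ∫ t in Set.Ioi (0 : ℝ), wI z a c t := by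
  rw [wF_eq hz 0 a c (by simpa using ha), wG]

noncomputable def wW (κ μ : ℂ) (z : ℝ) : ℂ :=
  cexp (-(z / 2)) * (z : ℂ) ^ κ * wF z (μ - κ + 1 / 2) (μ + κ - 1 / 2)

lemma wW_diff1 (κ : ℂ) {z : ℝ} (hz : 0 < z) : Differentiable ℂ fun μ => wW κ μ z := by
  unfold wW
  exact (wF_diff hz (a := fun μ => μ - κ + 1 / 2) (c := fun μ => μ + κ - 1 / 2)
    (by fun_prop) (by fun_prop)).const_mul _

lemma wW_diff2 (μ : ℂ) {z : ℝ} (hz : 0 < z) : Differentiable ℂ fun κ => wW κ μ z := by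
  unfold wW
  refine Differentiable.mul (Differentiable.mul (by fun_prop) ?_)
    (wF_diff hz (a := fun κ => μ - κ + 1 / 2) (c := fun κ => μ + κ - 1 / 2)
    (by fun_prop) (by fun_prop))
  exact differentiable_id.const_cpow (Or.inl (ofReal_ne_zero.2 hz.ne'))

lemma wW_eq {κ μ : ℂ} {z : ℝ} (hz : 0 < z) (h : 0 < (μ - κ + 1 / 2).re) :
    wW κ μ z = Complex.exp (-(z / 2)) * ((z : ℝ) : ℂ) ^ κ / Complex.Gamma (μ - κ + 1 / 2) *
          ∫ t in Set.Ioi (0 : ℝ),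
            ((t : ℝ) : ℂ) ^ (μ - κ - 1 / 2) * (1 + ((t : ℝ) : ℂ) / ((z : ℝ) : ℂ)) ^ (μ + κ - 1 / 2) *
              Real.exp (-t) := by
  rw [wW, wF_pos hz _ _ h]
  unfold wI
  rw [show μ - κ + 1 / 2 - 1 = μ - κ - 1 / 2 by ring]
  ring

lemma fubini_bdd {μ ν : Measure ℝ} [SFinite μ] [SFinite ν] {f g : ℝ → ℂ} (hf : Integrable f μ)
    (hg : Integrable g ν) {h : ℝ × ℝ → ℂ} (hh : Continuous h) (hb : ∀ p, ‖h p‖ ≤ 1) :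
    ∫ x, ∫ y, f x * g y * h (x, y) ∂ν ∂μ = ∫ y, ∫ x, f x * g y * h (x, y) ∂μ ∂ν := by
  refine integral_integral_swap (f := fun x y => f x * g y * h (x, y)) ?_
  exact (hf.mul_prod hg).mul_bdd (c := 1) hh.aestronglyMeasurable (Filter.Eventually.of_forall hb)

lemma gInt {a : ℂ} (ha : 0 < a.re) :
    IntegrableOn (fun t : ℝ => (t : ℂ) ^ (a - 1) * cexp (-t)) (Set.Ioi 0) := by
  have := Complex.GammaIntegral_convergent ha
  refine this.congr_fun (fun t _ => ?_) measurableSet_Ioi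
  simp only [ofReal_exp, ofReal_neg]
  ring

lemma wI_symm {z : ℝ} (hz : 0 < z) {a a' : ℂ} (ha' : 0 < a'.re) :
    (∫ t in Set.Ioi (0 : ℝ), wI z a (-a') t) * Gamma a' =
    ∫ t in Set.Ioi (0 : ℝ), ∫ u in Set.Ioi (0 : ℝ), ((t : ℂ) ^ (a - 1) * cexp (-t)) *
      ((u : ℂ) ^ (a' - 1) * cexp (-u)) * cexp (((-(|t| * |u| / z) : ℝ)) : ℂ) := by
  rw [← integral_mul_const]
  refine setIntegral_congr_fun measurableSet_Ioi fun t ht => ?_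
  rw [Set.mem_Ioi] at ht
  have hpos : 0 < t / z := by positivity
  have hb : (1 + (t : ℂ) / (z : ℂ)) = ((1 + t / z : ℝ) : ℂ) := by push_cast; rfl
  have := gamma_complex ha' (r := 1 + (t : ℂ) / (z : ℂ)) (by rw [hb, ofReal_re]; linarith)
  simp only [wI]
  rw [mul_assoc, mul_assoc, mul_comm ((Real.exp (-t) : ℝ) : ℂ), ← mul_assoc (_ ^ (-a')), ← this, mul_comm (∫ _ in _, _),
    ← mul_assoc, ← integral_const_mul]
  refine setIntegral_congr_fun measurableSet_Ioi fun u hu => ?_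
  rw [Set.mem_Ioi] at hu
  rw [abs_of_pos ht, abs_of_pos hu]
  have he : cexp (-((1 + (t : ℂ) / z) * u)) = cexp (-u) * cexp (((-(t * u / z) : ℝ)) : ℂ) := by
    rw [← Complex.exp_add]
    congr 1
    push_cast
    ring
  simp only [he]
  push_cast
  ring

lemma wF_symm {z : ℝ} (hz : 0 < z) {a a' : ℂ} (ha : 0 < a.re) (ha' : 0 < a'.re) :
    wF z a (-a') = wF z a' (-a) := by
  rw [wF_pos hz _ _ ha, wF_pos hz _ _ ha']
  have h1 := wI_symm hz (a := a) ha'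
  have h2 := wI_symm hz (a := a') ha
  have hsw := fubini_bdd (gInt ha) (gInt ha') (h := fun p => cexp (((-(|p.1| * |p.2| / z) : ℝ)) : ℂ))
    (by fun_prop) (by
      intro p
      rw [Complex.norm_exp, ofReal_re, Real.exp_le_one_iff, neg_nonpos]
      positivity)
  have h3 : (∫ t in Set.Ioi (0 : ℝ), wI z a (-a') t) * Gamma a' =
      (∫ t in Set.Ioi (0 : ℝ), wI z a' (-a) t) * Gamma a := by
    rw [h1, h2]
    refine hsw.trans ?_
    refine integral_congr_ae (Filter.Eventually.of_forall fun t => ?_)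
    refine integral_congr_ae (Filter.Eventually.of_forall fun u => ?_)
    simp only
    rw [mul_comm |t| |u|]
    ring
  have hG := Complex.Gamma_ne_zero_of_re_pos ha
  have hG' := Complex.Gamma_ne_zero_of_re_pos ha'
  field_simp
  linear_combination h3

lemma wW_symm (κ μ : ℂ) {z : ℝ} (hz : 0 < z) : wW κ (-μ) z = wW κ μ z := by
  have e1 := (wW_diff2 (-μ) hz)
  have e2 := (wW_diff2 μ hz)
  have := AnalyticOnNhd.eq_of_eventuallyEq (z₀ := ((-|μ.re| - 1 : ℝ) : ℂ))
    (fun x _ => e1.analyticAt x) (fun x _ => e2.analyticAt x) ?_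
  · exact congrFun this κ
  have hop : {w : ℂ | w.re < -|μ.re|} ∈ nhds ((-|μ.re| - 1 : ℝ) : ℂ) := by
    refine (isOpen_lt continuous_re continuous_const).mem_nhds ?_
    simp
  filter_upwards [hop] with w hw
  replace hw : w.re < -|μ.re| := hw
  have l1 := le_abs_self μ.re
  have l2 := neg_abs_le μ.re
  unfold wW
  congr 1
  have := wF_symm hz (a := -μ - w + 1 / 2) (a' := μ - w + 1 / 2) (by simp; linarith) (by simp; linarith)
  convert this using 2 <;> ring

lemma one_ne (b : ℝ) : (1 + I * b : ℂ) ≠ 0 := by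
  intro h
  have := congrArg re h
  simp at this

lemma oneI_norm (b : ℝ) : ‖(1 + I * b : ℂ)‖ = (1 + b ^ 2) ^ (1 / 2 : ℝ) := by
  rw [← Real.sqrt_eq_rpow, Complex.norm_def, normSq_apply]
  congr 1
  simp
  ring

lemma oneI_cont (A : ℂ) : Continuous (fun b : ℝ => (1 + I * b : ℂ) ^ A) := by
  refine continuous_iff_continuousAt.2 fun b => ?_
  refine ContinuousAt.cpow (by fun_prop) (by fun_prop) ?_
  left
  simp

lemma oneI_int {A : ℂ} (hA : 1 < A.re) : Integrable (fun b : ℝ => (1 + I * b : ℂ) ^ (-A)) := by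
  have h := (integrable_rpow_neg_one_add_norm_sq (E := ℝ) (μ := volume) (r := A.re)
    (by simpa using hA)).const_mul (Real.exp (Real.pi * |A.im|))
  refine h.mono' (oneI_cont _).aestronglyMeasurable (Filter.Eventually.of_forall fun b => ?_)
  rw [Complex.norm_cpow_of_ne_zero (one_ne b), oneI_norm, ← Real.rpow_mul (by positivity),
    div_eq_mul_inv, ← Real.exp_neg, mul_comm]
  have hp : (0 : ℝ) < 1 + b ^ 2 := by positivity
  have : (1 / 2 : ℝ) * (-A).re = -A.re / 2 := by simp; ring
  rw [this, Real.norm_eq_abs, sq_abs]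
  gcongr
  rw [neg_im, mul_neg, neg_neg]
  refine (le_abs_self _).trans ?_
  rw [abs_mul]
  gcongr
  exact Complex.abs_arg_le_pi _

open FourierTransform in
lemma fourier_gamma {A : ℂ} (hA : 1 < A.re) {v : ℝ} (hv : 0 < v) :
    ∫ b : ℝ, (1 + I * b : ℂ) ^ (-A) * cexp (I * v * b) =
      2 * Real.pi / Gamma A * ((v : ℂ) ^ (A - 1) * cexp (-v)) := by
  have hA0 : 0 < A.re := by linarith
  set f : ℝ → ℂ := Set.indicator (Set.Ioi 0) (fun t : ℝ => (t : ℂ) ^ (A - 1) * cexp (-t)) with hf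
  have hfi : Integrable f := (integrable_indicator_iff measurableSet_Ioi).2 (gInt hA0)
  have hF : 𝓕 f = fun ξ : ℝ => Gamma A * (1 + I * ((2 * Real.pi * ξ : ℝ)) : ℂ) ^ (-A) := by
    ext ξ
    have h1 := gamma_complex hA0 (r := 1 + I * ((2 * Real.pi * ξ : ℝ))) (by simp)
    rw [mul_comm, ← h1, Real.fourier_real_eq_integral_exp_smul, ← integral_indicator measurableSet_Ioi]
    congr 1
    ext t
    simp only [hf, Set.indicator]
    split_ifs
    · rw [smul_eq_mul, mul_left_comm, ← Complex.exp_add]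
      congr 2
      push_cast
      ring
    · simp
  have hFi : Integrable (𝓕 f) := by
    rw [hF]
    exact (((oneI_int hA).comp_mul_left' (R := 2 * Real.pi) (by positivity))).const_mul _
  have hcont : ContinuousAt f v := by
    have : ContinuousAt (fun t : ℝ => (t : ℂ) ^ (A - 1) * cexp (-t)) v :=
      (Complex.continuousAt_ofReal_cpow_const v _ (Or.inr (ne_of_gt hv))).mul (by fun_prop)
    refine this.congr ?_
    filter_upwards [lt_mem_nhds hv] with t ht
    simp [hf, ht]
  have hinv := hfi.fourierInv_fourier_eq hFi hcont
  rw [Real.fourierInv_eq_fourier_neg, Real.fourier_real_eq_integral_exp_smul, hF] at hinv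
  have hs := Measure.integral_comp_mul_left
    (fun b : ℝ => Gamma A * ((1 + I * b : ℂ) ^ (-A) * cexp (I * v * b))) (2 * Real.pi)
  have hG := Complex.Gamma_ne_zero_of_re_pos hA0
  have hpi : (Real.pi : ℂ) ≠ 0 := ofReal_ne_zero.2 Real.pi_ne_zero
  have hfv : f v = (v : ℂ) ^ (A - 1) * cexp (-v) := by simp [hf, hv]
  rw [← hfv, ← hinv]
  have he : ∀ ξ : ℝ, cexp (((-2 * Real.pi * ξ * -v : ℝ) : ℂ) * I) •
      (Gamma A * (1 + I * ((2 * Real.pi * ξ : ℝ)) : ℂ) ^ (-A)) =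
      Gamma A * ((1 + I * (2 * Real.pi * ξ : ℝ) : ℂ) ^ (-A) * cexp (I * v * (2 * Real.pi * ξ : ℝ))) := by
    intro ξ
    rw [smul_eq_mul, mul_comm, mul_assoc]
    congr 3
    push_cast
    ring
  simp only [he]
  rw [hs, integral_const_mul, abs_of_pos (by positivity), real_smul]
  push_cast
  generalize (∫ b : ℝ, (1 + I * b : ℂ) ^ (-A) * cexp (I * v * b)) = X
  field_simp

lemma main_fubini {A B : ℂ} (hA : 1 < A.re) (hB : 0 < B.re) {t : ℝ} (ht : 0 < t) :
    ∫ b : ℝ, (1 + I * b : ℂ) ^ (-A) * (1 - I * b : ℂ) ^ (-B) * cexp (I * t * b) =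
    2 * Real.pi / Gamma A / Gamma B * ∫ v in Set.Ioi (0 : ℝ), 
      (v : ℂ) ^ (B - 1) * ((t + v : ℝ) : ℂ) ^ (A - 1) * cexp (-(t + 2 * v)) := by
  have hG := Complex.Gamma_ne_zero_of_re_pos hB
  have hsw := fubini_bdd (oneI_int hA) (gInt hB) (h := fun p => cexp (((p.1 * (t + p.2) : ℝ)) * I))
    (by fun_prop) (by
      intro p
      rw [Complex.norm_exp_ofReal_mul_I])
  have h1 : ∀ b : ℝ, ∫ v in Set.Ioi (0 : ℝ), (1 + I * b : ℂ) ^ (-A) * ((v : ℂ) ^ (B - 1) * cexp (-v)) *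
      cexp (((b * (t + v) : ℝ)) * I) = (1 + I * b : ℂ) ^ (-A) * (1 - I * b : ℂ) ^ (-B) * cexp (I * t * b)
        * Gamma B := by
    intro b
    have hg := gamma_complex hB (r := 1 - I * b) (by simp)
    have : ∀ v : ℝ, (1 + I * b : ℂ) ^ (-A) * ((v : ℂ) ^ (B - 1) * cexp (-v)) *
      cexp (((b * (t + v) : ℝ)) * I) = ((1 + I * b : ℂ) ^ (-A) * cexp (I * t * b)) *
        ((v : ℂ) ^ (B - 1) * cexp (-((1 - I * b) * v))) := by
      intro v
      have : cexp (-v) * cexp (((b * (t + v) : ℝ)) * I) = cexp (I * t * b) * cexp (-((1 - I * b) * v)) := by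
        rw [← Complex.exp_add, ← Complex.exp_add]
        congr 1
        push_cast
        ring
      linear_combination ((1 + I * b : ℂ) ^ (-A) * (v : ℂ) ^ (B - 1)) * this
    simp only [this]
    rw [integral_const_mul, hg]
    ring
  have h2 : ∫ v in Set.Ioi (0 : ℝ), ∫ b : ℝ, (1 + I * b : ℂ) ^ (-A) * ((v : ℂ) ^ (B - 1) * cexp (-v)) *
      cexp (((b * (t + v) : ℝ)) * I) = 2 * Real.pi / Gamma A * ∫ v in Set.Ioi (0 : ℝ), 
      (v : ℂ) ^ (B - 1) * ((t + v : ℝ) : ℂ) ^ (A - 1) * cexp (-(t + 2 * v)) := by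
    rw [← integral_const_mul]
    refine setIntegral_congr_fun measurableSet_Ioi fun v hv => ?_
    rw [Set.mem_Ioi] at hv
    have hg := fourier_gamma hA (v := t + v) (by linarith)
    have : ∀ b : ℝ, (1 + I * b : ℂ) ^ (-A) * ((v : ℂ) ^ (B - 1) * cexp (-v)) *
      cexp (((b * (t + v) : ℝ)) * I) = ((v : ℂ) ^ (B - 1) * cexp (-v)) *
        ((1 + I * b : ℂ) ^ (-A) * cexp (I * ((t + v : ℝ) : ℂ) * b)) := by
      intro b
      rw [show I * ((t + v : ℝ) : ℂ) * b = ((b * (t + v) : ℝ)) * I by push_cast; ring]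
      ring
    simp only [this]
    rw [integral_const_mul, hg]
    have : cexp (-(t + 2 * v)) = cexp (-v) * cexp (-((t + v : ℝ) : ℂ)) := by
      rw [← Complex.exp_add]
      congr 1
      push_cast
      ring
    simp only [this]
    ring
  simp only [h1, h2] at hsw
  rw [integral_mul_const] at hsw
  rw [div_mul_eq_mul_div, eq_div_iff hG, hsw]

lemma sq_cpow (b : ℝ) (w : ℂ) :
    ((b ^ 2 + 1 : ℝ) : ℂ) ^ w = (1 + I * b : ℂ) ^ w * (1 - I * b : ℂ) ^ w := by
  have hc : (1 - I * b : ℂ) = (starRingEnd ℂ) (1 + I * b) := by simp [sub_eq_add_neg]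
  have harg : (1 + I * b : ℂ).arg ≠ Real.pi := by
    intro h
    rw [Complex.arg_eq_pi_iff] at h
    simp at h
    linarith [h.1]
  have hp : (0 : ℝ) < b ^ 2 + 1 := by positivity
  have h1 : ((b ^ 2 + 1 : ℝ) : ℂ) ≠ 0 := ofReal_ne_zero.2 hp.ne'
  have h2 : (1 - I * b : ℂ) ≠ 0 := by
    intro h
    have := congrArg re h
    simp at this
  rw [cpow_def_of_ne_zero h1, cpow_def_of_ne_zero (one_ne b), cpow_def_of_ne_zero h2, ← Complex.exp_add,
    ← add_mul, hc, Complex.log_conj _ harg, Complex.add_conj, Complex.log_re, oneI_norm,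
    ← Complex.ofReal_log hp.le, Real.log_rpow (by positivity)]
  congr 3
  rw [add_comm 1]
  push_cast
  ring

lemma sub_ne (b : ℝ) : (1 - I * b : ℂ) ≠ 0 := by
  intro h
  have := congrArg re h
  simp at this

lemma base_pow (b : ℝ) (m : ℤ) : (((b : ℂ) - I) / ((Real.sqrt (b ^ 2 + 1) : ℝ) : ℂ)) ^ (2 * m) =
    (-1) ^ m * ((1 + I * b : ℂ) ^ m * ((1 - I * b : ℂ) ^ m)⁻¹) := by
  have hp : (0 : ℝ) ≤ b ^ 2 + 1 := by positivity
  have h1 := one_ne b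
  have h2 := sub_ne b
  have h3 : ((Real.sqrt (b ^ 2 + 1) : ℝ) : ℂ) ^ 2 = (1 + I * b : ℂ) * (1 - I * b) := by
    rw [← ofReal_pow, Real.sq_sqrt hp]
    push_cast
    linear_combination (b : ℂ) ^ 2 * I_sq
  rw [zpow_mul, zpow_ofNat, div_pow, h3, ← inv_zpow, ← mul_zpow, ← mul_zpow]
  congr 1
  have hx : (1 - I * b : ℂ)⁻¹ * (1 - I * b) = 1 := inv_mul_cancel₀ h2
  rw [div_eq_iff (mul_ne_zero h1 h2)]
  linear_combination ((b : ℂ) ^ 2 + 1) * I_sq + (1 + I * b) ^ 2 * hx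

lemma integrand_eq (s : ℂ) (m : ℤ) (b : ℝ) :
    ((b ^ 2 + 1 : ℝ) : ℂ) ^ (-(s + 1 / 2)) *
      (((b : ℂ) - I) / ((Real.sqrt (b ^ 2 + 1) : ℝ) : ℂ)) ^ (2 * m) =
    (-1) ^ m * ((1 + I * b : ℂ) ^ (-(s + 1 / 2 - m)) * (1 - I * b : ℂ) ^ (-(s + 1 / 2 + m))) := by
  rw [sq_cpow, base_pow, show (-(s + 1 / 2 - m)) = -(s + 1 / 2) + m by ring,
    show (-(s + 1 / 2 + m)) = -(s + 1 / 2) - m by ring, cpow_add _ _ (one_ne b),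
    cpow_sub _ _ (sub_ne b), cpow_intCast, cpow_intCast]
  ring

lemma large_s {s : ℂ} {m : ℤ} (hs : |(m : ℝ)| + 1 / 2 < s.re) {t : ℝ} (ht : 0 < t) :
    ∫ b : ℝ, ((b ^ 2 + 1 : ℝ) : ℂ) ^ (-(s + 1 / 2)) *
        (((b : ℂ) - I) / ((Real.sqrt (b ^ 2 + 1) : ℝ) : ℂ)) ^ (2 * m) * cexp (I * t * b) =
      (-1 : ℂ) ^ m * ((Real.pi : ℝ) : ℂ) ^ (s + 1 / 2) * ((t / (2 * Real.pi) : ℝ) : ℂ) ^ (s - 1 / 2) /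
        Gamma (s + 1 / 2 - m) * wW (-m) (-s) (2 * t) := by
  have l1 := le_abs_self (m : ℝ)
  have l2 := neg_abs_le (m : ℝ)
  have hA : 1 < (s + 1 / 2 - m).re := by simp; linarith
  have hB : 0 < (s + 1 / 2 + m).re := by simp; linarith
  simp only [integrand_eq, mul_assoc ((-1 : ℂ) ^ m)]
  rw [integral_const_mul, main_fubini hA hB ht, wW_symm _ _ (by positivity), wW,
    show s - -(m : ℂ) + 1 / 2 = s + 1 / 2 + m by ring, wF_pos (by positivity) _ _ hB]
  have hsub : ∫ x in Set.Ioi (0 : ℝ), wI (2 * t) (s + 1 / 2 + m) (s + -m - 1 / 2) x =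
      2 * ∫ v in Set.Ioi (0 : ℝ), wI (2 * t) (s + 1 / 2 + m) (s + -m - 1 / 2) (2 * v) := by
    rw [integral_comp_mul_left_Ioi _ _ two_pos, mul_zero, real_smul]
    push_cast
    ring
  have hpt : ∫ v in Set.Ioi (0 : ℝ), wI (2 * t) (s + 1 / 2 + m) (s + -m - 1 / 2) (2 * v) =
      (2 : ℂ) ^ (s + 1 / 2 + m - 1) * (t : ℂ) ^ (-(s - 1 / 2 - m)) * cexp t *
       ∫ v in Set.Ioi (0 : ℝ), 
      (v : ℂ) ^ (s + 1 / 2 + m - 1) * ((t + v : ℝ) : ℂ) ^ (s + 1 / 2 - m - 1) * cexp (-(t + 2 * v)) := by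
    rw [← integral_const_mul]
    refine setIntegral_congr_fun measurableSet_Ioi fun v hv => ?_
    rw [Set.mem_Ioi] at hv
    have e1 : ((t + v : ℝ) : ℂ) ^ (s + 1 / 2 - m - 1) = (t : ℂ) ^ (s - 1 / 2 - m) *
        (1 + ((2 * v : ℝ) : ℂ) / ((2 * t : ℝ) : ℂ)) ^ (s + -m - 1 / 2) := by
      rw [show (1 + ((2 * v : ℝ) : ℂ) / ((2 * t : ℝ) : ℂ)) = ((1 + v / t : ℝ) : ℂ) by
          have : (t : ℂ) ≠ 0 := ofReal_ne_zero.2 ht.ne'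
          push_cast; field_simp,
        show s + -m - 1 / 2 = s - 1 / 2 - m by ring, show s + 1 / 2 - m - 1 = s - 1 / 2 - m by ring,
        ← mul_cpow_ofReal_nonneg ht.le (by positivity), ← ofReal_mul]
      congr 2
      field_simp
    have e2 : ((2 * v : ℝ) : ℂ) ^ (s + 1 / 2 + m - 1) = (2 : ℂ) ^ (s + 1 / 2 + m - 1) *
        (v : ℂ) ^ (s + 1 / 2 + m - 1) := by
      rw [ofReal_mul, mul_cpow_ofReal_nonneg (by norm_num) hv.le]
      norm_num
    have e3 : ((Real.exp (-(2 * v)) : ℝ) : ℂ) = cexp t * cexp (-(t + 2 * v)) := by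
      rw [← Complex.exp_add]
      push_cast
      congr 1
      ring
    have e4 : (t : ℂ) ^ (-(s - 1 / 2 - m)) * (t : ℂ) ^ (s - 1 / 2 - m) = 1 := by
      have : (t : ℂ) ≠ 0 := ofReal_ne_zero.2 ht.ne'
      rw [← cpow_add _ _ this]
      simp
    simp only [wI]
    rw [e1, e2, e3]
    linear_combination (-(2 : ℂ) ^ (s + 1 / 2 + m - 1) * (v : ℂ) ^ (s + 1 / 2 + m - 1) *
      (1 + ((2 * v : ℝ) : ℂ) / ((2 * t : ℝ) : ℂ)) ^ (s + -m - 1 / 2) * cexp t * cexp (-(t + 2 * v))) * e4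
  rw [hsub, hpt]
  generalize (∫ v in Set.Ioi (0 : ℝ), 
      (v : ℂ) ^ (s + 1 / 2 + m - 1) * ((t + v : ℝ) : ℂ) ^ (s + 1 / 2 - m - 1) * cexp (-(t + 2 * v))) = X
  have hconst : ((Real.pi : ℝ) : ℂ) ^ (s + 1 / 2) * ((t / (2 * Real.pi) : ℝ) : ℂ) ^ (s - 1 / 2) *
     (cexp (-(((2 * t : ℝ) : ℂ) / 2)) * ((2 * t : ℝ) : ℂ) ^ (-(m : ℂ)) *
     (2 * ((2 : ℂ) ^ (s + 1 / 2 + m - 1) * (t : ℂ) ^ (-(s - 1 / 2 - m)) * cexp t))) = 2 * Real.pi := by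
    have hpi := Real.pi_pos
    have p1 : ((Real.pi : ℝ) : ℂ) = cexp (Real.log Real.pi : ℝ) := by
      rw [← ofReal_exp, Real.exp_log hpi]
    have c1 : ∀ (x : ℝ), 0 < x → ∀ w : ℂ, (x : ℂ) ^ w = cexp ((Real.log x : ℝ) * w) := by
      intro x hx w
      rw [cpow_def_of_ne_zero (ofReal_ne_zero.2 hx.ne'), ofReal_log hx.le]
    have c2 : ∀ w : ℂ, (2 : ℂ) ^ w = cexp ((Real.log 2 : ℝ) * w) := by
      intro w
      rw [← c1 2 two_pos w]
      norm_num
    rw [c1 _ hpi, c1 _ (by positivity), c1 _ (by positivity), c1 _ ht, c2, Real.log_div (by positivity) (by positivity),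
      Real.log_mul (by positivity) (by positivity), Real.log_mul (by positivity) (by positivity)]
    have : ∀ a b c d e f g : ℂ, cexp a * cexp b * (cexp c * cexp d * (2 * (cexp e * cexp f * cexp g))) =
        2 * cexp (a + b + (c + d + (e + f + g))) := by
      intros
      simp only [Complex.exp_add]
      ring
    rw [this]
    conv_rhs => rw [p1]
    congr 2
    push_cast
    ring
  calc _ = (-1 : ℂ) ^ m * ((2 * Real.pi) / Gamma (s + 1 / 2 - m) / Gamma (s + 1 / 2 + m) * X) := by rfl
    _ = _ := by
      rw [← hconst]
      ring

lemma lhs_holo (m : ℤ) (t : ℝ) : DifferentiableOn ℂ (fun s : ℂ =>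
    ∫ b : ℝ, ((b ^ 2 + 1 : ℝ) : ℂ) ^ (-(s + 1 / 2)) *
        (((b : ℂ) - I) / ((Real.sqrt (b ^ 2 + 1) : ℝ) : ℂ)) ^ (2 * m) * cexp (I * t * b))
    {s | 0 < s.re} := by
  intro s0 hs0
  replace hs0 : 0 < s0.re := hs0
  refine (holo_int (R := s0.re / 2) (by linarith)
    (fun b => ((1 : ℝ) + ‖b‖ ^ 2) ^ (-(s0.re + 1) / 2)) ?_ ?_ ?_ ?_).differentiableWithinAt
  · intro w _
    refine Continuous.aestronglyMeasurable ?_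
    simp only [integrand_eq]
    refine Continuous.mul (continuous_const.mul ((oneI_cont _).mul ?_)) (by fun_prop)
    have := (oneI_cont (-(w + 1 / 2 + m))).comp continuous_neg
    refine this.congr fun b => ?_
    simp [sub_eq_add_neg]
  · refine Filter.Eventually.of_forall fun b w hw => ?_
    have := abs_lt.1 (re_near hw)
    have hp : (0 : ℝ) < b ^ 2 + 1 := by positivity
    have hn : ‖((b : ℂ) - I) / ((Real.sqrt (b ^ 2 + 1) : ℝ) : ℂ)‖ = 1 := by
      rw [norm_div, norm_real, Real.norm_eq_abs, abs_of_pos (Real.sqrt_pos.2 hp),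
        div_eq_one_iff_eq (Real.sqrt_pos.2 hp).ne', Complex.norm_def, normSq_apply]
      congr 1
      simp
      ring
    have he : ‖cexp (I * t * b)‖ = 1 := by
      rw [show I * (t : ℂ) * b = ((t * b : ℝ) : ℂ) * I by push_cast; ring, Complex.norm_exp_ofReal_mul_I]
    rw [norm_mul, norm_mul, norm_zpow, hn, he, norm_cpow_pos hp, one_zpow, mul_one, mul_one,
      Real.norm_eq_abs, sq_abs, add_comm 1]
    refine Real.rpow_le_rpow_of_exponent_le (by nlinarith [sq_nonneg b]) ?_
    simp
    linarith
  · exact integrable_rpow_neg_one_add_norm_sq (by simpa using hs0)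
  · refine Filter.Eventually.of_forall fun b => ?_
    have hp : (0 : ℝ) < b ^ 2 + 1 := by positivity
    have h1 : ((b ^ 2 + 1 : ℝ) : ℂ) ≠ 0 := ofReal_ne_zero.2 hp.ne'
    refine Differentiable.differentiableOn ?_
    refine ((Differentiable.const_cpow (by fun_prop) (Or.inl h1)).mul_const _).mul_const _

lemma pos_case {s : ℂ} (hs : 0 < s.re) (m : ℤ) {t : ℝ} (ht : 0 < t) :
    ∫ b : ℝ, ((b ^ 2 + 1 : ℝ) : ℂ) ^ (-(s + 1 / 2)) *
        (((b : ℂ) - I) / ((Real.sqrt (b ^ 2 + 1) : ℝ) : ℂ)) ^ (2 * m) * cexp (I * t * b) =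
      (-1 : ℂ) ^ m * ((Real.pi : ℝ) : ℂ) ^ (s + 1 / 2) * ((t / (2 * Real.pi) : ℝ) : ℂ) ^ (s - 1 / 2) /
        Gamma (s + 1 / 2 - m) * wW (-m) (-s) (2 * t) := by
  have hop : IsOpen {w : ℂ | 0 < w.re} := isOpen_lt continuous_const continuous_re
  have hR : Differentiable ℂ (fun s : ℂ => (-1 : ℂ) ^ m * ((Real.pi : ℝ) : ℂ) ^ (s + 1 / 2) *
      ((t / (2 * Real.pi) : ℝ) : ℂ) ^ (s - 1 / 2) /
        Gamma (s + 1 / 2 - m) * wW (-m) (-s) (2 * t)) := by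
    have hpi : ((Real.pi : ℝ) : ℂ) ≠ 0 := ofReal_ne_zero.2 Real.pi_ne_zero
    have ht' : ((t / (2 * Real.pi) : ℝ) : ℂ) ≠ 0 := by
      have := Real.pi_pos
      exact ofReal_ne_zero.2 (by positivity)
    simp only [div_eq_mul_inv _ (Gamma _)]
    refine Differentiable.mul (Differentiable.mul (Differentiable.mul (Differentiable.const_mul ?_ _) ?_) ?_) ?_
    · exact Differentiable.const_cpow (by fun_prop) (Or.inl hpi)
    · exact Differentiable.const_cpow (by fun_prop) (Or.inl ht')
    · exact Complex.differentiable_one_div_Gamma.comp (by fun_prop : Differentiable ℂ fun s : ℂ => s + 1 / 2 - m)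
    · exact (wW_diff1 (-m) (z := 2 * t) (by positivity)).comp differentiable_neg
  have hm := abs_nonneg (m : ℝ)
  refine ((lhs_holo m t).analyticOnNhd hop).eqOn_of_preconnected_of_eventuallyEq
    (fun x _ => hR.analyticAt x) (isPreconnected_re 0) (z₀ := ((|(m : ℝ)| + 1 : ℝ) : ℂ)) ?_ ?_ hs
  · rw [Set.mem_ofPred_eq, ofReal_re]
    linarith
  · have hop : {w : ℂ | |(m : ℝ)| + 1 / 2 < w.re} ∈ nhds ((|(m : ℝ)| + 1 : ℝ) : ℂ) := by
      refine (isOpen_lt continuous_const continuous_re).mem_nhds ?_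
      rw [Set.mem_ofPred_eq, ofReal_re]
      linarith
    filter_upwards [hop] with w hw
    exact large_s hw ht

lemma neg_flip (s : ℂ) (m : ℤ) (t : ℝ) :
    ∫ b : ℝ, ((b ^ 2 + 1 : ℝ) : ℂ) ^ (-(s + 1 / 2)) *
        (((b : ℂ) - I) / ((Real.sqrt (b ^ 2 + 1) : ℝ) : ℂ)) ^ (2 * m) * cexp (I * t * b) =
    ∫ b : ℝ, ((b ^ 2 + 1 : ℝ) : ℂ) ^ (-(s + 1 / 2)) *
        (((b : ℂ) - I) / ((Real.sqrt (b ^ 2 + 1) : ℝ) : ℂ)) ^ (2 * (-m)) *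
          cexp (I * ((-t : ℝ) : ℂ) * b) := by
  rw [← integral_neg_eq_self]
  congr 1
  ext b
  rw [integrand_eq, integrand_eq]
  have h : (-1 : ℂ) ^ (-m) = (-1) ^ m := by
    rw [zpow_neg, ← inv_zpow]
    norm_num
  rw [h]
  push_cast
  simp only [mul_neg, sub_neg_eq_add, ← sub_eq_add_neg, neg_mul]
  ring

/-- The archimedean Whittaker integral: there is a function `W` (the classical Whittaker
function `W_{κ,μ}`, characterized by being entire in each of `κ, μ` and agreeing with the
standard integral representation
`W_{κ,μ}(z) = e^{-z/2} z^κ Γ(μ-κ+1/2)⁻¹ ∫₀^∞ t^{μ-κ-1/2}(1+t/z)^{μ+κ-1/2}e^{-t} dt`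
on its domain of validity) such that for `Re(s) > 0`, even `k` and real `t ≠ 0`:
`∫_ℝ (b²+1)^{-(s+1/2)} ((b-i)/√(b²+1))^k e^{itb} db
   = (-1)^{k/2} π^{s+1/2} (|t|/2π)^{s-1/2} / Γ(s+1/2 - sgn(t)k/2) · W_{-sgn(t)k/2, -s}(2|t|)`. -/
theorem stmt9 :
    ∃ W : ℂ → ℂ → ℝ → ℂ,
      (∀ (κ : ℂ) (z : ℝ), 0 < z → Differentiable ℂ fun μ => W κ μ z) ∧
      (∀ (μ : ℂ) (z : ℝ), 0 < z → Differentiable ℂ fun κ => W κ μ z) ∧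
      (∀ (κ μ : ℂ) (z : ℝ), 0 < z → 0 < (μ - κ + 1 / 2).re →
        W κ μ z = Complex.exp (-(z / 2)) * ((z : ℝ) : ℂ) ^ κ / Complex.Gamma (μ - κ + 1 / 2) *
          ∫ t in Set.Ioi (0 : ℝ),
            ((t : ℝ) : ℂ) ^ (μ - κ - 1 / 2) * (1 + ((t : ℝ) : ℂ) / ((z : ℝ) : ℂ)) ^ (μ + κ - 1 / 2) *
              Real.exp (-t)) ∧
      ∀ (s : ℂ), 0 < s.re → ∀ (k : ℤ), Even k → ∀ (t : ℝ), t ≠ 0 →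
        ∫ b : ℝ, ((b ^ 2 + 1 : ℝ) : ℂ) ^ (-(s + 1 / 2)) *
            (((b : ℂ) - I) / ((Real.sqrt (b ^ 2 + 1) : ℝ) : ℂ)) ^ k *
            Complex.exp (I * (t : ℂ) * (b : ℂ)) =
          (-1 : ℂ) ^ (k / 2) * ((Real.pi : ℝ) : ℂ) ^ (s + 1 / 2) *
              ((|t| / (2 * Real.pi) : ℝ) : ℂ) ^ (s - 1 / 2) /
              Complex.Gamma (s + 1 / 2 - (Real.sign t : ℂ) * (k : ℂ) / 2) *
            W (-(Real.sign t : ℂ) * (k : ℂ) / 2) (-s) (2 * |t|) := by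
  refine ⟨wW, fun κ z hz => wW_diff1 κ hz, fun μ z hz => wW_diff2 μ hz,
    fun κ μ z hz h => wW_eq hz h, ?_⟩
  intro s hs k hk t ht
  obtain ⟨m, rfl⟩ := hk
  have hdiv : (m + m) / 2 = m := by omega
  rw [hdiv]
  rcases lt_or_gt_of_ne ht with h | h
  · rw [Real.sign_of_neg h, abs_of_neg h, show m + m = 2 * m by ring, neg_flip, pos_case hs (-m) (neg_pos.2 h)]
    have h1 : (-1 : ℂ) ^ (-m) = (-1) ^ m := by
      rw [zpow_neg, ← inv_zpow]
      norm_num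
    rw [h1]
    push_cast
    congr 3 <;> ring
  · rw [Real.sign_of_pos h, abs_of_pos h, show m + m = 2 * m by ring, pos_case hs m h]
    push_cast
    congr 3 <;> ring
end

section
/- With notation as in the local Whittaker computation: for the normalized spherical vector $f_s^{\rm sph} \in V_s$ (the $K$-invariant function with $f_s^{\rm sph}(1)=1$), $\alpha, y \in F^\times$, and $q^{2s} \neq 1$, one has $(W_s^\alpha f_s^{\rm sph})\big(\begin{pmatrix}y&0\\0&1\end{pmatrix}\big) = \frac{(|\alpha|^{2s}|y|^{1/2+s} - q^{2s}|y|^{1/2-s})(1 - q^{-2s-1})}{1-q^{2s}}$ if $v(\alpha y) \geq 0$, and $= 0$ if $v(\alpha y) < 0$. -/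
open Complex Matrix MeasureTheory Filter

lemma aux_ultra {F : Type*} [Field F] (abv : AbsoluteValue F ℝ) (q : ℕ) (hq : 1 < q)
    (hdisc : ∀ x : F, x ≠ 0 → ∃ m : ℤ, abv x = (q : ℝ) ^ m) :
    ∀ x y : F, ∀ r : ℝ, abv x ≤ r → abv y ≤ r → abv (x + y) ≤ r := by
  have hq2 : (2 : ℝ) ≤ q := by exact_mod_cast hq
  have hq1 : (1 : ℝ) < q := by linarith
  have hlt : ∀ x : F, abv x < q → abv x ≤ 1 := by
    intro x hx
    by_cases h0 : x = 0
    · simp [h0]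
    obtain ⟨m, hm⟩ := hdisc x h0
    rw [hm] at hx ⊢
    have : m < 1 := by
      rw [← zpow_lt_zpow_iff_right₀ hq1]; simpa using hx
    have h2 : m ≤ 0 := by omega
    simpa using zpow_le_zpow_right₀ hq1.le h2
  have key : ∀ x : F, abv x ≤ 1 → abv (1 + x) ≤ 1 := by
    intro x hx
    by_contra hcon
    have h1 : (q : ℝ) ≤ abv (1 + x) := by
      by_contra h; exact hcon (hlt _ (not_le.mp h))
    have h2 : abv (1 + x) ≤ 1 + abv x := by simpa using abv.add_le 1 x
    have hqe : (q : ℝ) = 2 := by linarith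
    have e2 : abv (1 + x) = 2 := by linarith
    have h3 : abv ((1 + x) * (1 + x)) ≤ abv 1 + abv (2 * x) + abv (x * x) := by
      have : (1 + x) * (1 + x) = 1 + 2 * x + x * x := by ring
      rw [this]
      exact (abv.add_le _ _).trans (by gcongr; exact abv.add_le _ _)
    simp only [map_mul, map_one, e2] at h3
    have hx0 := abv.nonneg x
    have h20 := abv.nonneg (2 : F)
    have h4 : 2 ≤ abv (2 : F) := by nlinarith
    have h5 : abv (2 : F) ≤ 2 := by
      have := abv.add_le 1 1
      rw [one_add_one_eq_two] at this
      simp at this; linarith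
    have h6 : abv (2 : F) = 2 := le_antisymm h5 h4
    have h7 : abv (3 : F) ≤ 3 := by
      have := abv.add_le 2 1
      rw [show (2 : F) + 1 = 3 by norm_num] at this
      simp [h6] at this; linarith
    have h8 : 3 ≤ abv (3 : F) := by
      have := abv.add_le 3 1
      rw [show (3 : F) + 1 = 2 * 2 by norm_num] at this
      simp [h6] at this; linarith
    have h9 : (3 : F) ≠ 0 := by
      intro h; rw [h] at h8; simp at h8; linarith
    obtain ⟨m, hm⟩ := hdisc 3 h9
    have h10 : (2 : ℝ) ^ m = 3 := by rw [← hqe, ← hm]; linarith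
    have a1 : 1 < m := by
      rw [← zpow_lt_zpow_iff_right₀ (show (1 : ℝ) < 2 by norm_num), h10]; norm_num
    have a2 : m < 2 := by
      rw [← zpow_lt_zpow_iff_right₀ (show (1 : ℝ) < 2 by norm_num), h10]; norm_num
    omega
  have key2 : ∀ x y : F, abv x ≤ abv y → abv (x + y) ≤ abv y := by
    intro x y h
    by_cases hy : y = 0
    · subst hy; simpa using h
    have hp := abv.pos hy
    have := key (x / y) (by rw [map_div₀]; exact (div_le_one hp).2 h)
    have e : x + y = y * (1 + x / y) := by field_simp; ring
    rw [e, map_mul]; nlinarith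
  intro x y r hx hy
  rcases le_total (abv x) (abv y) with h | h
  · exact (key2 x y h).trans hy
  · rw [add_comm]; exact (key2 y x h).trans hx

lemma aux_sum {F : Type*} [Field F] [MeasurableSpace F]
    (abv : AbsoluteValue F ℝ)
    (hul : ∀ x y : F, ∀ r : ℝ, abv x ≤ r → abv y ≤ r → abv (x + y) ≤ r)
    (μ : Measure F)
    (hμinv : ∀ (t : F) (s : Set F), μ ((t + ·) ⁻¹' s) = μ s)
    (hmeas : ∀ (c : F) (r : ℝ), MeasurableSet {x : F | abv (x - c) ≤ r})
    (g : F → ℂ) (r R : ℝ) (hfin : μ {x : F | abv x ≤ r} ≠ ⊤)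
    (hg : ∀ x c, abv (x - c) ≤ r → g x = g c)
    (T : Finset F) (hT : {x : F | abv x ≤ R} = ⋃ c ∈ T, {x : F | abv (x - c) ≤ r})
    (hd : ∀ c ∈ T, ∀ c' ∈ T, c ≠ c' → r < abv (c - c')) :
    IntegrableOn g {x : F | abv x ≤ R} μ ∧
    ∫ x in {x : F | abv x ≤ R}, g x ∂μ = (μ.real {x : F | abv x ≤ r} : ℂ) * ∑ c ∈ T, g c ∧
    μ {x : F | abv x ≤ R} = T.card * μ {x : F | abv x ≤ r} := by
  have hb : ∀ c, μ {x : F | abv (x - c) ≤ r} = μ {x : F | abv x ≤ r} := by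
    intro c
    rw [← hμinv (-c)  {x : F | abv x ≤ r}]
    congr 1; ext x; simp [sub_eq_neg_add]
  have hdis : (T : Set F).PairwiseDisjoint (fun c => {x : F | abv (x - c) ≤ r}) := by
    intro c hc c' hc' hne
    rw [Function.onFun, Set.disjoint_left]
    intro x hx hx'
    have := hul (x - c') (-(x - c)) r hx' (by rw [abv.map_neg]; exact hx)
    have h2 := hd c hc c' hc' hne
    rw [show x - c' + -(x - c) = c - c' by ring] at this
    linarith
  have hi : ∀ c, IntegrableOn g {x : F | abv (x - c) ≤ r} μ := by
    intro c
    have : IntegrableOn (fun _ => g c) {x : F | abv (x - c) ≤ r} μ :=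
      integrableOn_const (by rw [hb]; exact hfin)
    exact this.congr_fun (fun x hx => (hg x c hx).symm) (hmeas c r)
  refine ⟨?_, ?_, ?_⟩
  · rw [hT]; exact (integrableOn_finset_iUnion).2 fun c _ => hi c
  · rw [hT, integral_biUnion_finset T (fun c _ => hmeas c r) hdis (fun c _ => hi c), Finset.mul_sum]
    refine Finset.sum_congr rfl fun c _ => ?_
    rw [setIntegral_congr_fun (hmeas c r) (g := fun _ => g c) (fun x hx => hg x c hx)]
    simp [Measure.real, hb c]
  · rw [hT, measure_biUnion_finset hdis (fun c _ => hmeas c r)]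
    simp [hb]

lemma aux_coset {F : Type*} [Field F]
    (abv : AbsoluteValue F ℝ) (q : ℕ) (hq : 1 < q)
    (hcoset : ∀ n : ℕ, ∃ T : Finset F, T.card = q ^ n ∧
      ({x : F | abv x ≤ (q : ℝ) ^ n} = ⋃ c ∈ T, {x : F | abv (x - c) ≤ 1}) ∧
      ∀ c ∈ T, ∀ c' ∈ T, c ≠ c' → 1 < abv (c - c'))
    (p : F) (hp : abv p = q) (m : ℤ) (n : ℕ) :
    ∃ T : Finset F, T.card = q ^ n ∧
      ({x : F | abv x ≤ (q : ℝ) ^ (m + n)} = ⋃ c ∈ T, {x : F | abv (x - c) ≤ (q : ℝ) ^ m}) ∧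
      ∀ c ∈ T, ∀ c' ∈ T, c ≠ c' → (q : ℝ) ^ m < abv (c - c') := by
  classical
  have hq0 : (0 : ℝ) < q := by exact_mod_cast (by omega : 0 < q)
  have hp0 : p ≠ 0 := by
    intro h; rw [h, map_zero] at hp; linarith
  have hw0 : p ^ m ≠ 0 := zpow_ne_zero _ hp0
  have hw : abv (p ^ m) = (q : ℝ) ^ m := by rw [map_zpow₀, hp]
  have hqm : (0 : ℝ) < (q : ℝ) ^ m := zpow_pos hq0 _
  obtain ⟨T, h1, h2, h3⟩ := hcoset n
  have hsc : ∀ x c, abv (x - p ^ m * c) = (q : ℝ) ^ m * abv ((p ^ m)⁻¹ * x - c) := by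
    intro x c
    rw [← hw, ← map_mul]; congr 1; field_simp
  refine ⟨T.image (p ^ m * ·), ?_, ?_, ?_⟩
  · rw [Finset.card_image_of_injective _ (mul_right_injective₀ hw0), h1]
  · ext x
    have := Set.ext_iff.1 h2 ((p ^ m)⁻¹ * x)
    simp only [Set.mem_ofPred_eq, Set.mem_iUnion, exists_prop, Finset.mem_image,
      exists_exists_and_eq_and, hsc] at this ⊢
    have e := hsc x 0
    simp only [mul_zero, sub_zero] at e
    rw [e, zpow_add₀ hq0.ne', zpow_natCast, mul_le_mul_iff_right₀ hqm, this]
    simp only [mul_le_iff_le_one_right hqm]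
  · simp only [Finset.mem_image]
    rintro _ ⟨c, hc, rfl⟩ _ ⟨c', hc', rfl⟩ hne
    have := h3 c hc c' hc' (fun h => hne (by rw [h]))
    rw [← mul_sub, map_mul, hw]
    nlinarith

lemma aux_cpow (q : ℕ) (hq : 1 < q) (k : ℤ) (w : ℂ) :
    ((((q : ℝ) ^ k : ℝ)) : ℂ) ^ w = ((((q : ℝ)) : ℂ) ^ w) ^ k := by
  have hq0 : (0 : ℝ) < q := by exact_mod_cast (by omega : 0 < q)
  have hqm : (0 : ℝ) < (q : ℝ) ^ k := zpow_pos hq0 _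
  rw [cpow_def_of_ne_zero (by exact_mod_cast hqm.ne'), cpow_def_of_ne_zero (by exact_mod_cast hq0.ne'),
    ← Complex.ofReal_log hqm.le, ← Complex.ofReal_log hq0.le, Real.log_zpow, ← Complex.exp_int_mul]
  push_cast; ring_nf

/-- abstract radial computation -/
lemma aux_radial {F : Type*} [MeasurableSpace F] (μ : Measure F)
    (B : ℤ → Set F) (hB : ∀ n, MeasurableSet (B n)) (hmono : ∀ n, B n ⊆ B (n + 1))
    (g G : F → ℂ) (hgi : ∀ n, IntegrableOn g (B n) μ) (k : ℤ) (Φ : ℤ → ℂ)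
    (h0 : ∀ b ∈ B k, G b = Φ k * g b)
    (h1 : ∀ n, k ≤ n → ∀ b ∈ B (n + 1) \ B n, G b = Φ (n + 1) * g b) (n : ℤ) (hn : k ≤ n) :
    IntegrableOn G (B n) μ ∧ (∫ b in B k, G b ∂μ = Φ k * ∫ b in B k, g b ∂μ) ∧
    ∫ b in B (n + 1), G b ∂μ = ∫ b in B n, G b ∂μ +
      Φ (n + 1) * (∫ b in B (n + 1), g b ∂μ - ∫ b in B n, g b ∂μ) := by
  have hi : ∀ n, k ≤ n → IntegrableOn G (B (n + 1) \ B n) μ := by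
    intro n hn
    have : IntegrableOn (fun b => Φ (n + 1) * g b) (B (n + 1) \ B n) μ :=
      ((hgi (n + 1)).mono_set Set.sdiff_subset).const_mul _
    exact this.congr_fun (fun b hb => (h1 n hn b hb).symm) ((hB _).diff (hB _))
  have hint : IntegrableOn G (B n) μ := by
    induction n, hn using Int.leInduction with
    | base =>
      have : IntegrableOn (fun b => Φ k * g b) (B k) μ := (hgi k).const_mul _
      exact this.congr_fun (fun b hb => (h0 b hb).symm) (hB _)
    | succ n hn ih =>
      rw [← Set.union_sdiff_cancel (hmono n)]
      exact ih.union (hi n hn)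
  refine ⟨hint, ?_, ?_⟩
  · rw [setIntegral_congr_fun (hB k) h0, integral_const_mul]
  · rw [← setIntegral_sdiff (hB n) (hgi (n + 1)) (hmono n), ← integral_const_mul,
      ← setIntegral_congr_fun ((hB _).diff (hB _)) (h1 n hn)]
    rw [← setIntegral_union Set.disjoint_sdiff_right ((hB _).diff (hB _)) hint (hi n hn),
      Set.union_sdiff_cancel (hmono n)]

lemma aux_alg (X Q Z : ℂ) (hX : X ≠ 0) (hQ : Q ≠ 0) (hZ : X ^ 2 = Z * Q) (hZ1 : Z ≠ 1)
    (I J : ℤ → ℂ) (a k : ℤ) (hka : k ≤ a)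
    (hI : ∀ m, m ≤ a → I m = Q ^ m) (hI0 : ∀ m, a < m → I m = 0)
    (h0 : J k = X ^ (k - 2 * k) * I k)
    (hJ : ∀ n, k ≤ n → J (n + 1) = J n + X ^ (k - 2 * (n + 1)) * (I (n + 1) - I n))
    (n : ℤ) (hn : a + 1 ≤ n) :
    J n = (Z ^ (-a) * X ^ k - Z * (Q / X) ^ k) * (1 - (Z * Q)⁻¹) / (1 - Z) := by
  have hZ0 : Z ≠ 0 := by
    rintro rfl; simp [hX] at hZ
  have hXm : ∀ m : ℤ, X ^ (k - 2 * m) = X ^ k * (Z ^ (-m) * Q ^ (-m)) := by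
    intro m
    rw [← mul_zpow, ← hZ, sub_eq_add_neg, zpow_add₀ hX, ← zpow_natCast X 2, ← _root_.zpow_mul]
    congr 2; push_cast; ring
  have hQX : (Q / X) ^ k = X ^ k * Z ^ (-k) := by
    have : Q / X = X * Z⁻¹ := by field_simp; rw [hZ]; ring
    rw [this, mul_zpow, _root_.inv_zpow, _root_.zpow_neg]
  have h1Z : 1 - Z ≠ 0 := sub_ne_zero.2 (Ne.symm hZ1)
  have step1 : ∀ n, k ≤ n → n ≤ a →
      J n * (1 - Z) = X ^ k * (Z ^ (-k) * (1 - Z) - (1 - Q⁻¹) * (Z ^ (-k) - Z ^ (-n))) := by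
    intro n hn
    induction n, hn using Int.leInduction with
    | base =>
      intro h
      rw [h0, hI k h, hXm, _root_.zpow_neg Q]
      have := zpow_ne_zero k hQ
      field_simp; ring
    | succ n hn ih =>
      intro h
      rw [hJ n hn, add_mul, ih (by omega), hI _ h, hI n (by omega), hXm, _root_.zpow_neg Q,
        neg_add, zpow_add₀ hZ0, zpow_add₀ hQ]
      have := zpow_ne_zero n hQ
      simp only [_root_.zpow_neg_one, zpow_one]
      field_simp; ring
  induction n, hn using Int.leInduction with
  | base =>
    rw [eq_div_iff h1Z, hJ a hka, add_mul, step1 a hka le_rfl, hI0 _ (by omega), hI a le_rfl, hXm,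
      hQX, _root_.zpow_neg Q, neg_add, zpow_add₀ hZ0, zpow_add₀ hQ]
    have := zpow_ne_zero a hQ
    simp only [_root_.zpow_neg_one, zpow_one]
    field_simp; ring
  | succ n hn ih =>
    rw [hJ n (by omega), ih, hI0 n (by omega), hI0 _ (by omega)]; simp


/-- The local Whittaker function of the normalized spherical vector `f_s^sph` in the
principal series `V_s` of `GL(2,F)`, `F` a non-archimedean local field of residue
cardinality `q`:
`(W_s^α f_s^sph)(diag(y,1)) = (|α|^{2s}|y|^{1/2+s} - q^{2s}|y|^{1/2-s})(1-q^{-2s-1})/(1-q^{2s})`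
if `v(αy) ≥ 0`, and `0` if `v(αy) < 0`.  The Whittaker integral is realised as the limit of
the integrals over `𝔭^{-n}`. -/
theorem stmt13 {F : Type*} [Field F] [MeasurableSpace F]
    (abv : AbsoluteValue F ℝ) (q : ℕ) (hq : 1 < q)
    (hdisc : ∀ x : F, x ≠ 0 → ∃ m : ℤ, abv x = (q : ℝ) ^ m)
    (μ : Measure F)
    (hμ1 : μ {x : F | abv x ≤ 1} = 1)
    (hμinv : ∀ (t : F) (s : Set F), μ ((t + ·) ⁻¹' s) = μ s)
    (hmeas : ∀ (c : F) (r : ℝ), MeasurableSet {x : F | abv (x - c) ≤ r})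
    (hcoset : ∀ n : ℕ, ∃ T : Finset F, T.card = q ^ n ∧
      ({x : F | abv x ≤ (q : ℝ) ^ n} = ⋃ c ∈ T, {x : F | abv (x - c) ≤ 1}) ∧
      ∀ c ∈ T, ∀ c' ∈ T, c ≠ c' → 1 < abv (c - c'))
    (ψ : F → ℂ)
    (hψtriv : ∀ x : F, abv x ≤ 1 → ψ x = 1)
    (hψnt : ∃ x : F, abv x ≤ (q : ℝ) ∧ ψ x ≠ 1)
    (hψadd : ∀ x y : F, ψ (x + y) = ψ x * ψ y)
    (s : ℂ) (hs : (((q : ℝ)) : ℂ) ^ (2 * s) ≠ 1)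
    (f : Matrix (Fin 2) (Fin 2) F → ℂ)
    (htrans : ∀ (a d : F), a ≠ 0 → d ≠ 0 → ∀ (b : F) (g : Matrix (Fin 2) (Fin 2) F),
      f (!![a, b; 0, d] * g) = ((abv (a * d⁻¹) : ℝ) : ℂ) ^ (s + 1 / 2) * f g)
    (hK : ∀ (g κ : Matrix (Fin 2) (Fin 2) F),
      abv (κ 0 0) ≤ 1 → abv (κ 0 1) ≤ 1 → abv (κ 1 0) ≤ 1 → abv (κ 1 1) ≤ 1 →
      abv κ.det = 1 → f (g * κ) = f g)
    (hone : f 1 = 1)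
    (α y : F) (hα : α ≠ 0) (hy : y ≠ 0) :
    (abv (α * y) ≤ 1 →
      Tendsto (fun n : ℕ =>
          ∫ b in {b : F | abv b ≤ (q : ℝ) ^ n},
            f (!![0, -1; 1, 0] * !![1, b; 0, 1] * !![y, 0; 0, 1]) * ψ (-(α * b)) ∂μ)
        atTop
        (nhds ((((abv α : ℝ) : ℂ) ^ (2 * s) * ((abv y : ℝ) : ℂ) ^ (1 / 2 + s) -
            (((q : ℝ)) : ℂ) ^ (2 * s) * ((abv y : ℝ) : ℂ) ^ (1 / 2 - s)) *
            (1 - (((q : ℝ)) : ℂ) ^ (-(2 * s) - 1)) / (1 - (((q : ℝ)) : ℂ) ^ (2 * s))))) ∧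
    (1 < abv (α * y) →
      Tendsto (fun n : ℕ =>
          ∫ b in {b : F | abv b ≤ (q : ℝ) ^ n},
            f (!![0, -1; 1, 0] * !![1, b; 0, 1] * !![y, 0; 0, 1]) * ψ (-(α * b)) ∂μ)
        atTop (nhds 0)) := by

  classical
  have hq0 : (0 : ℝ) < q := by exact_mod_cast (by omega : 0 < q)
  have hq1 : (1 : ℝ) < q := by exact_mod_cast hq
  have hul := aux_ultra abv q hq hdisc
  obtain ⟨p, hp, hψp⟩ : ∃ p : F, abv p = q ∧ ψ p ≠ 1 := by
    obtain ⟨x, hx, hx1⟩ := hψnt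
    refine ⟨x, ?_, hx1⟩
    have h1 : 1 < abv x := by
      by_contra h; exact hx1 (hψtriv x (not_lt.1 h))
    obtain ⟨m, hm⟩ := hdisc x (by rintro rfl; simp at h1; linarith)
    rw [hm] at h1 hx ⊢
    have a1 : 0 < m := by
      rw [← zpow_lt_zpow_iff_right₀ hq1]; simpa using h1
    have a2 : m ≤ 1 := by
      rw [← zpow_le_zpow_iff_right₀ hq1]; simpa using hx
    have : m = 1 := by omega
    simp [this]
  have hp0 : p ≠ 0 := by
    intro h; rw [h, map_zero] at hp; linarith
  obtain ⟨a', ha'⟩ := hdisc α hα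
  obtain ⟨a, rfl⟩ : ∃ a, a' = -a := ⟨-a', by simp⟩
  obtain ⟨k, hk⟩ := hdisc y hy
  set B : ℤ → Set F := fun m => {x : F | abv x ≤ (q : ℝ) ^ m} with hBdef
  have hcos := aux_coset abv q hq hcoset p hp
  have hBm : ∀ m, MeasurableSet (B m) := fun m => by have := hmeas 0 ((q : ℝ) ^ m); simp only [sub_zero] at this; exact this
  have hBmono : ∀ m, B m ⊆ B (m + 1) := fun m x (hx : abv x ≤ _) =>
    hx.trans (zpow_le_zpow_right₀ hq1.le (by omega))
  have hB0 : μ (B 0) = 1 := by simpa [hBdef] using hμ1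
  -- comparison of measures
  have hcmp : ∀ (m : ℤ) (n : ℕ), μ (B m) ≠ ⊤ → μ (B (m + n)) = (q : ENNReal) ^ n * μ (B m) := by
    intro m n hfin
    obtain ⟨T, h1, h2, h3⟩ := hcos m n
    have := (aux_sum abv hul μ hμinv hmeas (fun _ => 0) _ _ hfin (fun _ _ _ => rfl) T h2 h3).2.2
    rw [h1] at this
    simpa using this
  have hfin : ∀ m, μ (B m) ≠ ⊤ := by
    intro m
    have h1 : μ (B (m.toNat)) ≠ ⊤ := by
      have := hcmp 0 m.toNat (by simp [hB0])
      rw [zero_add] at this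
      rw [this, hB0]; simp
    refine ne_top_of_le_ne_top h1 (measure_mono fun x (hx : abv x ≤ _) =>
      hx.trans (zpow_le_zpow_right₀ hq1.le (by omega)))
  have hvol : ∀ m, μ.real (B m) = (q : ℝ) ^ m := by
    intro m
    rcases le_total 0 m with h | h
    · obtain ⟨n, rfl⟩ := Int.eq_ofNat_of_zero_le h
      have := hcmp 0 n (hfin 0)
      rw [zero_add] at this
      simp [Measure.real, this, hB0]
    · obtain ⟨n, hn⟩ := Int.exists_eq_neg_ofNat h
      have := hcmp m n (hfin m)
      rw [hn, neg_add_cancel, hB0] at this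
      have h2 := congrArg ENNReal.toReal this
      simp only [ENNReal.toReal_one, ENNReal.toReal_mul, ENNReal.toReal_pow,
        ENNReal.toReal_natCast] at h2
      rw [hn, _root_.zpow_neg, zpow_natCast, Measure.real]
      exact eq_inv_of_mul_eq_one_right h2.symm
  set g : F → ℂ := fun b => ψ (-(α * b)) with hg
  have hαle : ∀ x, abv x ≤ (q : ℝ) ^ a → abv (-(α * x)) ≤ 1 := by
    intro x hx
    rw [abv.map_neg, map_mul, ha']
    calc (q : ℝ) ^ (-a) * abv x ≤ (q : ℝ) ^ (-a) * (q : ℝ) ^ a := by gcongr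
      _ = 1 := by rw [← zpow_add₀ hq0.ne']; simp
  have hgadd : ∀ x c, g (x + c) = g x * g c := by
    intro x c
    simp only [hg]; rw [← hψadd]; congr 1; ring
  have hgc : ∀ x c, abv (x - c) ≤ (q : ℝ) ^ a → g x = g c := by
    intro x c h
    have : x = (x - c) + c := by ring
    rw [this, hgadd, show g (x - c) = 1 from hψtriv _ (hαle _ h), one_mul]
  have hg1 : ∀ m, m ≤ a → ∀ x ∈ B m, g x = 1 := by
    intro m hm x hx
    exact hψtriv _ (hαle _ (le_trans hx (zpow_le_zpow_right₀ hq1.le hm)))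
  have hgi : ∀ m, IntegrableOn g (B m) μ := by
    intro m
    rcases le_total m a with h | h
    · have : IntegrableOn (fun _ => (1 : ℂ)) (B m) μ := integrableOn_const (hfin m)
      exact this.congr_fun (fun x hx => (hg1 m h x hx).symm) (hBm m)
    · obtain ⟨n, rfl⟩ := Int.le.dest h
      obtain ⟨T, h1, h2, h3⟩ := hcos a n
      exact (aux_sum abv hul μ hμinv hmeas g _ _ (hfin a) hgc T h2 h3).1
  have hI : ∀ m, m ≤ a → ∫ b in B m, g b ∂μ = (((q : ℝ)) : ℂ) ^ m := by
    intro m hm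
    rw [setIntegral_congr_fun (hBm m) (g := fun _ => 1) (hg1 m hm)]
    simp [hvol]
  have hI0 : ∀ m, a < m → ∫ b in B m, g b ∂μ = 0 := by
    intro m hm
    obtain ⟨n, rfl⟩ := Int.le.dest hm.le
    obtain ⟨T, h1, h2, h3⟩ := hcos a n
    obtain ⟨t, ht, hgt⟩ : ∃ t, abv t ≤ (q : ℝ) ^ (a + (n : ℤ)) ∧ g t ≠ 1 := by
      refine ⟨-(p / α), ?_, ?_⟩
      · rw [abv.map_neg, map_div₀, hp, ha', _root_.zpow_neg, div_inv_eq_mul, ← zpow_one_add₀ hq0.ne']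
        exact zpow_le_zpow_right₀ hq1.le (by omega)
      · simp only [hg]
        rw [show -(α * -(p / α)) = p by field_simp]; exact hψp
    have e1 := (aux_sum abv hul μ hμinv hmeas g _ _ (hfin a) hgc T h2 h3).2.1
    have e2 := (aux_sum abv hul μ hμinv hmeas g ((q : ℝ) ^ a) ((q : ℝ) ^ (a + (n : ℤ))) (hfin a) hgc
      (T.image (t + ·)) ?_ ?_).2.1
    · rw [Finset.sum_image (fun x _ y _ h => add_left_cancel h)] at e2
      simp only [hgadd, ← Finset.mul_sum] at e2
      have e3 : (1 - g t) * ∫ b in B (a + n), g b ∂μ = 0 := by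
        rw [sub_mul, one_mul, sub_eq_zero]
        nth_rw 1 [e2]; rw [e1]; ring
      exact (mul_eq_zero.1 e3).resolve_left (sub_ne_zero.2 hgt.symm)
    · ext x
      have := Set.ext_iff.1 h2 (x - t)
      simp only [Set.mem_ofPred_eq, Set.mem_iUnion, exists_prop, Finset.mem_image,
        exists_exists_and_eq_and] at this ⊢
      simp only [← sub_sub, ← this]
      constructor
      · intro h
        rw [sub_eq_add_neg]
        exact hul _ _ _ h (by rwa [abv.map_neg])
      · intro h
        simpa using hul _ _ _ h ht
    · simp only [Finset.mem_image]
      rintro _ ⟨c, hc, rfl⟩ _ ⟨c', hc', rfl⟩ hne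
      rw [add_sub_add_left_eq_sub]
      exact h3 c hc c' hc' (fun h => hne (by rw [h]))
  -- the spherical function
  set X : ℂ := (((q : ℝ)) : ℂ) ^ (s + 1 / 2) with hXdef
  have hQ0 : (((q : ℝ)) : ℂ) ≠ 0 := by exact_mod_cast hq0.ne'
  have hX0 : X ≠ 0 := by simp [hXdef, cpow_eq_zero_iff]; omega
  have hmat : ∀ b : F, (!![0, -1; 1, 0] * !![1, b; 0, 1] * !![y, 0; 0, 1] : Matrix (Fin 2) (Fin 2) F)
      = !![0, -1; y, b] := by
    intro b; simp
  have hKone : ∀ κ : Matrix (Fin 2) (Fin 2) F,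
      abv (κ 0 0) ≤ 1 → abv (κ 0 1) ≤ 1 → abv (κ 1 0) ≤ 1 → abv (κ 1 1) ≤ 1 →
      abv κ.det = 1 → f κ = 1 := by
    intro κ h1 h2 h3 h4 h5
    rw [← hone, ← hK 1 κ h1 h2 h3 h4 h5, one_mul]
  have hf0 : ∀ b ∈ B k, f !![0, -1; y, b] = X ^ (k - 2 * k) := by
    intro b hb
    have hb' : abv b ≤ abv y := by rw [hk]; exact hb
    have : (!![0, -1; y, b] : Matrix (Fin 2) (Fin 2) F)
        = !![1, 0; 0, y] * !![0, -1; 1, b / y] := by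
      simp; field_simp
    rw [this, htrans 1 y one_ne_zero hy, hKone]
    · rw [one_mul, map_inv₀, hk, ← _root_.zpow_neg, aux_cpow q hq, mul_one]; congr 1; ring
    · simp
    · simp
    · simp
    · simpa using (div_le_one (abv.pos hy)).2 hb'
    · simp [det_fin_two]
  have hf1 : ∀ n, k ≤ n → ∀ b ∈ B (n + 1) \ B n, f !![0, -1; y, b] = X ^ (k - 2 * (n + 1)) := by
    rintro n hn b ⟨hb1, hb2⟩
    have hb1 : abv b ≤ (q : ℝ) ^ (n + 1) := hb1
    have hb2 : (q : ℝ) ^ n < abv b := not_le.1 hb2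
    have hb0 : b ≠ 0 := by
      rintro rfl; rw [map_zero] at hb2; exact absurd hb2 (not_lt.2 (zpow_pos hq0 _).le)
    obtain ⟨m, hm⟩ := hdisc b hb0
    rw [hm] at hb1 hb2
    have a1 := (zpow_lt_zpow_iff_right₀ hq1).1 hb2
    have a2 := (zpow_le_zpow_iff_right₀ hq1).1 hb1
    obtain rfl : m = n + 1 := by omega
    have : (!![0, -1; y, b] : Matrix (Fin 2) (Fin 2) F)
        = !![y / b, -1; 0, b] * !![1, 0; y / b, 1] := by
      simp; field_simp
    rw [this, htrans (y / b) b (div_ne_zero hy hb0) hb0, hKone]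
    · rw [map_mul, map_div₀, map_inv₀, hk, hm, ← _root_.zpow_neg, ← zpow_sub₀ hq0.ne',
        ← zpow_add₀ hq0.ne', aux_cpow q hq, mul_one]; congr 1; ring
    · simp
    · simp
    · have : abv y ≤ abv b := by
        rw [hk, hm]; exact zpow_le_zpow_right₀ hq1.le (by omega)
      simpa using (div_le_one (abv.pos hb0)).2 this
    · simp
    · simp [det_fin_two]
  set G : F → ℂ := fun b => f !![0, -1; y, b] * g b with hG
  have hrad := aux_radial μ B hBm hBmono g G hgi k (fun m => X ^ (k - 2 * m))
    (fun b hb => by simp only [hG, hf0 b hb]) (fun n hn b hb => by simp only [hG, hf1 n hn b hb])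
  have hfun : (fun n : ℕ =>
          ∫ b in {b : F | abv b ≤ (q : ℝ) ^ n},
            f (!![0, -1; 1, 0] * !![1, b; 0, 1] * !![y, 0; 0, 1]) * ψ (-(α * b)) ∂μ)
      = fun n : ℕ => ∫ b in B n, G b ∂μ := by
    funext n
    simp only [hmat, hG, hg, hBdef, zpow_natCast]
  rw [hfun, map_mul, ha', hk, ← zpow_add₀ hq0.ne']
  constructor
  · intro hle
    have hka : k ≤ a := by
      have : -a + k ≤ 0 := by
        rw [← zpow_le_zpow_iff_right₀ hq1]; simpa using hle
      omega
    have hZ : X ^ 2 = (((q : ℝ)) : ℂ) ^ (2 * s) * (((q : ℝ)) : ℂ) := by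
      rw [hXdef, ← cpow_nat_mul]
      nth_rw 3 [← cpow_one (((q : ℝ)) : ℂ)]
      rw [← cpow_add _ _ hQ0]; congr 1; push_cast; ring
    have hY : (((q : ℝ)) : ℂ) ^ (1 / 2 - s) = (((q : ℝ)) : ℂ) / X := by
      rw [eq_div_iff hX0, hXdef, ← cpow_add _ _ hQ0]
      nth_rw 2 [← cpow_one (((q : ℝ)) : ℂ)]
      congr 1; ring
    have hW : (((q : ℝ)) : ℂ) ^ (-(2 * s) - 1)
        = ((((q : ℝ)) : ℂ) ^ (2 * s) * (((q : ℝ)) : ℂ))⁻¹ := by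
      nth_rw 3 [← cpow_one (((q : ℝ)) : ℂ)]
      rw [← cpow_add _ _ hQ0, ← cpow_neg]; congr 1; ring
    have halg := aux_alg X (((q : ℝ)) : ℂ) ((((q : ℝ)) : ℂ) ^ (2 * s)) hX0 hQ0 hZ hs
      (fun m => ∫ b in B m, g b ∂μ) (fun m => ∫ b in B m, G b ∂μ) a k hka hI hI0
      (hrad k le_rfl).2.1 (fun n hn => (hrad n hn).2.2)
    rw [aux_cpow q hq, aux_cpow q hq, aux_cpow q hq, hY, hW, add_comm (1 / 2) s, ← hXdef]
    refine tendsto_const_nhds.congr' ?_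
    filter_upwards [eventually_ge_atTop (a + 1).toNat] with n hn
    exact (halg n (by omega)).symm
  · intro hlt
    have hak : a < k := by
      have : 0 < -a + k := by
        rw [← zpow_lt_zpow_iff_right₀ hq1]; simpa using hlt
      omega
    have hz : ∀ n, k ≤ n → ∫ b in B n, G b ∂μ = 0 := by
      intro n hn
      induction n, hn using Int.leInduction with
      | base => rw [(hrad k le_rfl).2.1, hI0 k hak, mul_zero]
      | succ n hn ih =>
        rw [(hrad n hn).2.2, ih, hI0 n (by omega), hI0 _ (by omega)]; simp
    refine tendsto_const_nhds.congr' ?_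
    filter_upwards [eventually_ge_atTop k.toNat] with n hn
    exact (hz n (by omega)).symm
end

section
/- (Fourier expansion of $E_2$ from the adelic construction) For $z = x + iy$ in the upper half plane, $-\frac{3}{\pi y} + \frac{1}{2\zeta(2)}\sum_{c\in\mathbb{Z}}\sum_{d\in\mathbb{Z}, (c,d)\neq(0,0)}\frac{1}{(cz+d)^2} = 1 - \frac{3}{\pi y} - 24\sum_{n=1}^{\infty}\sigma(n)e^{2\pi i n z}$, where the inner sum over $d$ is performed first (Eisenstein summation), $\zeta(2)=\pi^2/6$ and $\sigma(n) = \sum_{d\mid n} d$. -/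
open Complex

theorem aux_e2_formula (z : UpperHalfPlane) (a : ℕ) :
    EisensteinSeries.e2Summand ((a + 1 : ℕ) : ℤ) z = -4 * (Real.pi : ℂ) ^ 2 *
      ∑' n : ℕ+, (n : ℂ) * cexp (2 * Real.pi * I * z) ^ ((a + 1) * (n : ℕ)) := by
  have H2 := EisensteinSeries.qExpansion_identity_pnat (k := 1) (by grind)
    ⟨(a + 1) * z, by simpa [show 0 < ((a + 1) : ℝ) by positivity] using z.2⟩
  have h1 : EisensteinSeries.e2Summand ((a + 1 : ℕ) : ℤ) z =
      ∑' n : ℤ, 1 / (((a : ℂ) + 1) * z + n) ^ (1 + 1) := by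
    unfold EisensteinSeries.e2Summand
    refine tsum_congr fun n ↦ ?_
    simp [EisensteinSeries.eisSummand]
  rw [h1]
  refine H2.trans ?_
  congr 1
  · simp [mul_pow]
    ring
  · refine tsum_congr fun n ↦ ?_
    rw [pow_one, pow_mul, ← Complex.exp_nat_mul _ (a + 1)]
    congr 3
    push_cast
    ring

theorem aux_e2_summable (z : UpperHalfPlane) :
    Summable (fun m : ℤ ↦ EisensteinSeries.e2Summand m z) := by
  have h : Summable (fun n : ℕ ↦ EisensteinSeries.e2Summand (n : ℤ) z) := by
    rw [← summable_nat_add_iff 1]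
    simp only [aux_e2_formula]
    refine Summable.mul_left _ ?_
    rw [← summable_pnat_iff_summable_succ
      (f := fun b : ℕ ↦ ∑' c : ℕ+, (c : ℂ) * cexp (2 * Real.pi * I * z) ^ (b * c : ℕ))]
    apply (summable_prod_mul_pow 1 (UpperHalfPlane.norm_exp_two_pi_I_lt_one z)).prod.congr
    simp
  refine Summable.of_nat_of_neg h (h.congr fun n ↦ ?_)
  exact (EisensteinSeries.e2Summand_even z n).symm

/-- The Fourier expansion of the weight-2 Eisenstein series `E₂` (with Eisenstein summation,
i.e. the inner sum over `d` performed first):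
`-3/(πy) + (1/(2ζ(2))) ∑_{c∈ℤ} ∑_{d∈ℤ} (cz+d)^{-2} = 1 - 3/(πy) - 24 ∑_{n≥1} σ(n) e^{2πinz}`.
(In the term `c = d = 0` the convention `(0:ℂ)⁻¹ = 0` realises the omission of that term.) -/
theorem stmt19 (z : ℂ) (hz : 0 < z.im) :
    -3 / (Real.pi * z.im) + 1 / (2 * riemannZeta 2) *
        ∑' c : ℤ, ∑' d : ℤ, ((c : ℂ) * z + (d : ℂ)) ^ (-2 : ℤ) =
      1 - 3 / (Real.pi * z.im) -
        24 * ∑' n : ℕ, (∑ d ∈ (n + 1).divisors, (d : ℂ)) *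
          Complex.exp (2 * Real.pi * I * ((n : ℂ) + 1) * z) := by
  have hG : EisensteinSeries.E2 ⟨z, hz⟩ = 1 / (2 * riemannZeta 2) *
      ∑' c : ℤ, ∑' d : ℤ, ((c : ℂ) * z + (d : ℂ)) ^ (-2 : ℤ) := by
    have : EisensteinSeries.G2 ⟨z, hz⟩ =
        ∑' c : ℤ, EisensteinSeries.e2Summand c ⟨z, hz⟩ :=
      tsum_eq_of_summable_unconditional (aux_e2_summable ⟨z, hz⟩)
    simp only [EisensteinSeries.E2, Pi.smul_apply, smul_eq_mul, this]
    rfl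
  rw [← hG, EisensteinSeries.E2_eq_tsum_cexp, tsum_pnat_eq_tsum_succ
    (f := fun n ↦ (ArithmeticFunction.sigma 1 n : ℂ) * cexp (2 * Real.pi * I * z) ^ n)]
  have : ∀ n : ℕ, (ArithmeticFunction.sigma 1 (n + 1) : ℂ) *
      cexp (2 * Real.pi * I * z) ^ (n + 1) = (∑ d ∈ (n + 1).divisors, (d : ℂ)) *
          Complex.exp (2 * Real.pi * I * ((n : ℂ) + 1) * z) := by
    intro n
    rw [ArithmeticFunction.sigma_one_apply, ← Complex.exp_nat_mul]
    push_cast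
    congr 2
    ring
  simp only [this]
  ring
end
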